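/- Let B be a Hilbert space (or a reflexive separable Banach space), t > 0, and let C and D be generators of C₀-semigroups exp(sC) and exp(sD) on B. Suppose: (i) D(C) ∩ D(D) is dense in B; (ii) D(C*) ∩ D(D*) is dense in B*; (iii) there exist a ∈ ℝ, M ≥ 1 with ‖(exp((s/n)C) exp((s/n)D))^m‖ ≤ M·exp(a·s·m/n) for all n, m ∈ ℕ, s > 0. Then C + D (with domain D(C) ∩ D(D)) is closable and its closure generates a C₀-semigroup if and only if there exists a dense linear subspace A ⊆ D(C) ∩ D(D) such that for every f ∈ A and s ≥ 0 there is a sequence (f_n) in D(C) ∩ D(D) with: (a) ‖(exp((t/n)C) exp((t/n)D))^{[n s]} f − f_n‖ → 0 as n → ∞; (b) ((C+D) f_n) is a bounded sequence. Moreover, if (a)–(b) hold, then exp(s(closure of C+D)) f = lim_{n→∞} (exp((s/n)C) exp((s/n)D))^n f (limit in norm) for all s > 0 and f ∈ B. -/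

import Mathlib

open Filter Topology MeasureTheory

noncomputable section

variable {B : Type*} [NormedAddCommGroup B] [InnerProductSpace ℝ B] [CompleteSpace B]

/-- `y` is the value of the strong derivative at `0` of `F : [0,∞) → L(B)` at `ψ`. -/
def DerivAtZero (F : ℝ → (B →L[ℝ] B)) (ψ y : B) : Prop :=
  Tendsto (fun h : ℝ => h⁻¹ • (F h ψ - F 0 ψ)) (𝓝[>] (0 : ℝ)) (𝓝 y)

/-- A `C₀`-semigroup on `B` (as a function on `[0,∞)`, modelled on all of `ℝ`). -/
def IsC0Semigroup (S : ℝ → (B →L[ℝ] B)) : Prop :=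
  S 0 = 1 ∧ (∀ a b : ℝ, 0 ≤ a → 0 ≤ b → S (a + b) = S a * S b) ∧
    (∀ x : B, ContinuousOn (fun s => S s x) (Set.Ici (0 : ℝ))) ∧
    ∃ M, 1 ≤ M ∧ ∃ w : ℝ, ∀ s : ℝ, 0 ≤ s → ‖S s‖ ≤ M * Real.exp (w * s)

/-- `Z` is the generator of the semigroup `S`. -/
def IsGeneratorOf (S : ℝ → (B →L[ℝ] B)) (Z : B →ₗ.[ℝ] B) : Prop :=
  ∀ x y : B, DerivAtZero S x y ↔ ∃ hx : x ∈ Z.domain, Z ⟨x, hx⟩ = y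

/-- The approximation condition (a)–(b) for the Trotter product, with boundedness. -/
def TrotterApproxBounded (SC SD : ℝ → (B →L[ℝ] B)) (C D : B →ₗ.[ℝ] B) (t : ℝ) : Prop :=
  ∃ A : Submodule ℝ B, (A : Set B) ⊆ ((C + D).domain : Set B) ∧ Dense (A : Set B) ∧
    ∀ f ∈ A, ∀ s : ℝ, 0 ≤ s → ∃ fs : ℕ → (C + D).domain,
      Tendsto (fun n : ℕ =>
        ‖((SC (t / n) * SD (t / n)) ^ ⌊(n : ℝ) * s⌋₊) f - (fs n : B)‖) atTop (𝓝 0) ∧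
      ∃ R : ℝ, ∀ n : ℕ, ‖(C + D) (fs n)‖ ≤ R

open scoped InnerProduct InnerProductSpace

/-!
Put `F h = exp (hC) exp (hD)`, `A_h = (F h - 1) / h`, and let `G` be the graph of `C + D`.

Sufficiency. Density of `D(C*) ∩ D(D*)` makes `C + D` closable, because there `h ↦ (F h)*` is
differentiable at `0`. Let `g` be orthogonal to the range of `μ - (C + D)` and `f ∈ A`. The numbers
`φ k = ⟪F (t / n) ^ k f, g⟫` satisfy `φ (k + 1) = (1 + μ t / n) φ k` up to a defect. Boundedness of
`(C + D) f_n` forces the defect at `k = ⌊n s⌋` to tend to `0` for each `s`, because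
`A_h F h ^ k f - (C + D) f_n`, with `h = t / n`, is bounded and tends to `0` when paired with a
vector of `D(C*) ∩ D(D*)`, hence tends to `0` weakly. By dominated convergence the accumulated
defect vanishes as well, so `|⟪f, g⟫| ≤ M exp ((b - μ) t N) ‖f‖ ‖g‖` for all `N`, hence `g = 0`.
The range of `μ - (C + D)` being dense, the resolvents of `A_h` converge strongly to a resolvent of
the closure of `G`, which inherits their power bounds, and the Hille–Yosida theorem applies.

Necessity and the product formula. If `S` is the semigroup generated by the closure of `G`, then
`F h ^ k R_h w - R_h S (k h) w`, where `R_h` is the resolvent of `A_h`, telescopes into `k` steps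
of size `o(h)`, so `F h ^ k → S τ` strongly as `k h → τ`. Since `S` preserves the domain of the
closure, `S (t s) f` is a limit of vectors `f_n` along which `(C + D) f_n` converges.
-/

section EventuallyBounded

variable {𝕜 X Y ι : Type*} [NontriviallyNormedField 𝕜] [NormedAddCommGroup X] [NormedSpace 𝕜 X]
  [NormedAddCommGroup Y] [NormedSpace 𝕜 Y] {l : Filter ι} {T : ι → X →L[𝕜] Y} {K : ℝ}

lemma tendsto_clm_apply (hK : ∀ᶠ i in l, ‖T i‖ ≤ K) {y : X} {z : Y} {u : ι → X}
    (hT : Tendsto (fun i => T i y) l (𝓝 z)) (hu : Tendsto u l (𝓝 y)) :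
    Tendsto (fun i => T i (u i)) l (𝓝 z) := by
  have hdiff : Tendsto (fun i => T i (u i - y)) l (𝓝 0) := by
    have hbound : Tendsto (fun i => K * ‖u i - y‖) l (𝓝 0) := by
      simpa using (hu.sub_const y).norm.const_mul K
    refine squeeze_zero_norm' ?_ hbound
    filter_upwards [hK] with i hi using (T i).le_of_opNorm_le hi _
  simpa using hdiff.add hT

lemma cauchy_map_clm_apply_of_dense [l.NeBot] (hK : ∀ᶠ i in l, ‖T i‖ ≤ K) {s : Set X}
    (hs : Dense s) (h : ∀ x ∈ s, Cauchy (map (fun i => T i x) l)) (x : X) :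
    Cauchy (map (fun i => T i x) l) := by
  simp only [Metric.cauchy_iff, map_neBot_iff, Filter.mem_map] at h ⊢
  refine ⟨‹_›, fun ε hε => ?_⟩
  obtain ⟨y, hys, hxy⟩ := Metric.mem_closure_iff.1 (hs x) (ε / (3 * (|K| + 1))) (by positivity)
  obtain ⟨-, hCauchy⟩ := h y hys
  obtain ⟨t, ht, hty⟩ := hCauchy (ε / 3) (by positivity)
  have hclose : ∀ i, ‖T i‖ ≤ K → dist (T i x) (T i y) < ε / 3 := fun i hi =>
    calc dist (T i x) (T i y) ≤ ‖T i‖ * dist x y := (T i).lipschitz.dist_le_mul x y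
      _ ≤ (|K| + 1) * dist x y := by gcongr; linarith [le_abs_self K]
      _ < (|K| + 1) * (ε / (3 * (|K| + 1))) := by gcongr
      _ = ε / 3 := by field_simp
  refine ⟨(fun i => T i x) '' {i | T i y ∈ t ∧ ‖T i‖ ≤ K}, ?_, ?_⟩
  · filter_upwards [ht, hK] with i hit hiK using ⟨i, ⟨hit, hiK⟩, rfl⟩
  · rintro _ ⟨i, ⟨hit, hiK⟩, rfl⟩ _ ⟨j, ⟨hjt, hjK⟩, rfl⟩
    have htri := dist_triangle4 (T i x) (T i y) (T j y) (T j x)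
    rw [dist_comm (T j y)] at htri
    linarith [hclose i hiK, hclose j hjK, hty _ hit _ hjt]

lemma exists_clm_tendsto_of_dense [l.NeBot] [CompleteSpace Y] (hK : ∀ᶠ i in l, ‖T i‖ ≤ K)
    {s : Set X} (hs : Dense s) (h : ∀ x ∈ s, Cauchy (map (fun i => T i x) l)) :
    ∃ R : X →L[𝕜] Y, ∀ x, Tendsto (fun i => T i x) l (𝓝 (R x)) := by
  choose f hf using fun x =>
    cauchy_map_iff_exists_tendsto.1 (cauchy_map_clm_apply_of_dense hK hs h x)
  let L : X →ₗ[𝕜] Y := linearMapOfTendsto f (fun i => (T i : X →ₗ[𝕜] Y)) (tendsto_pi_nhds.2 hf)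
  refine ⟨L.mkContinuous K fun x => le_of_tendsto (hf x).norm ?_, hf⟩
  filter_upwards [hK] with i hi using (T i).le_of_opNorm_le hi x

lemma norm_le_of_tendsto_clm_apply [l.NeBot] (hK : ∀ᶠ i in l, ‖T i‖ ≤ K) {L : X →L[𝕜] Y}
    (h : ∀ x, Tendsto (fun i => T i x) l (𝓝 (L x))) : ‖L‖ ≤ K := by
  obtain ⟨i, hi⟩ := hK.exists
  refine L.opNorm_le_bound ((norm_nonneg _).trans hi) fun x => le_of_tendsto (h x).norm ?_
  filter_upwards [hK] with i hi using (T i).le_of_opNorm_le hi x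

lemma tendsto_clm_apply_of_dense (hK : ∀ᶠ i in l, ‖T i‖ ≤ K) {L : X →L[𝕜] Y} {s : Set X}
    (hs : Dense s) (h : ∀ x ∈ s, Tendsto (fun i => T i x) l (𝓝 (L x))) (x : X) :
    Tendsto (fun i => T i x) l (𝓝 (L x)) := by
  rw [Metric.tendsto_nhds]
  intro ε hε
  obtain ⟨κ, hκ, hκpos⟩ : ∃ κ, |K| + ‖L‖ ≤ κ ∧ 0 < κ :=
    ⟨|K| + ‖L‖ + 1, (lt_add_one _).le, by positivity⟩
  obtain ⟨y, hys, hxy⟩ := Metric.mem_closure_iff.1 (hs x) (ε / (2 * κ)) (by positivity)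
  filter_upwards [hK, Metric.tendsto_nhds.1 (h y hys) (ε / 2) (by positivity)] with i hi hiy
  have hx : dist (T i x) (T i y) ≤ ‖T i‖ * dist x y := (T i).lipschitz.dist_le_mul x y
  have hL : dist (L x) (L y) ≤ ‖L‖ * dist x y := L.lipschitz.dist_le_mul x y
  have hsum : (‖T i‖ + ‖L‖) * dist x y < ε / 2 :=
    calc (‖T i‖ + ‖L‖) * dist x y ≤ κ * dist x y := by gcongr; linarith [le_abs_self K]
      _ < κ * (ε / (2 * κ)) := by gcongr
      _ = ε / 2 := by field_simp
  have htri := dist_triangle4 (T i x) (T i y) (L y) (L x)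
  rw [dist_comm (L y)] at htri
  linarith [add_mul ‖T i‖ ‖L‖ (dist x y)]

lemma tendstoUniformlyOn_clm_of_isCompact (hK : ∀ᶠ i in l, ‖T i‖ ≤ K) {L : X →L[𝕜] Y}
    (hL : ∀ x, Tendsto (fun i => T i x) l (𝓝 (L x))) {Z : Set X} (hZ : IsCompact Z) :
    TendstoUniformlyOn (fun i => ⇑(T i)) L l Z := by
  refine (tendstoLocallyUniformlyOn_iff_tendstoUniformlyOn_of_compact hZ).1
    (tendstoLocallyUniformlyOn_iff_forall_tendsto.2 fun x _ => ?_)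
  refine Tendsto.mono_right (Tendsto.prodMk_nhds ?_ ?_) (nhds_le_uniformity (L x))
  · exact L.continuous.continuousAt.tendsto.comp (tendsto_snd.mono_right nhdsWithin_le_nhds)
  · exact tendsto_clm_apply (T := fun p : ι × X => T p.1) (tendsto_fst.eventually hK)
      ((hL x).comp tendsto_fst) (tendsto_snd.mono_right nhdsWithin_le_nhds)

end EventuallyBounded

lemma norm_pow_apply_sub_le {𝕜 X : Type*} [NontriviallyNormedField 𝕜] [NormedAddCommGroup X]
    [NormedSpace 𝕜 X] {P : X →L[𝕜] X} {K δ : ℝ} {k : ℕ} (hP : ∀ m < k, ‖P ^ m‖ ≤ K) (z : ℕ → X)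
    (hz : ∀ j < k, ‖P (z j) - z (j + 1)‖ ≤ δ) :
    ‖(P ^ k) (z 0) - z k‖ ≤ k * (K * δ) := by
  induction k generalizing z with
  | zero => simp
  | succ k ih =>
    have hK : 0 ≤ K := (norm_nonneg _).trans (hP k k.lt_succ_self)
    have hhead : ‖(P ^ k) (P (z 0) - z 1)‖ ≤ K * δ :=
      calc ‖(P ^ k) (P (z 0) - z 1)‖ ≤ K * ‖P (z 0) - z 1‖ :=
            (P ^ k).le_of_opNorm_le (hP k k.lt_succ_self) _
        _ ≤ K * δ := by gcongr; exact hz 0 k.succ_pos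
    have htail : ‖(P ^ k) (z 1) - z (k + 1)‖ ≤ k * (K * δ) :=
      ih (fun m hm => hP m (hm.trans k.lt_succ_self)) (fun j => z (j + 1))
        fun j hj => hz (j + 1) (Nat.succ_lt_succ hj)
    have hsplit : (P ^ (k + 1)) (z 0) - z (k + 1)
        = (P ^ k) (P (z 0) - z 1) + ((P ^ k) (z 1) - z (k + 1)) := by
      rw [pow_succ, mul_apply_eq_comp, map_sub]; abel
    rw [hsplit, Nat.cast_succ, add_one_mul]
    linarith [norm_add_le ((P ^ k) (P (z 0) - z 1)) ((P ^ k) (z 1) - z (k + 1))]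

section Resolvent

variable {A : Type*} [NormedRing A] [NormedAlgebra ℝ A] {P : A} {M p q : ℝ}

lemma hasSum_resolvent_of_norm_pow_le [CompleteSpace A] (hq : 0 ≤ q) (hqp : q < p)
    (hP : ∀ m, ‖P ^ m‖ ≤ M * q ^ m) :
    p ∈ resolventSet ℝ P ∧ HasSum (fun j => (p ^ (j + 1))⁻¹ • P ^ j) (resolvent P p) := by
  have hp : 0 < p := hq.trans_lt hqp
  have hsum : Summable fun j : ℕ => (p⁻¹ • P) ^ j := by
    have hgeom : Summable fun j : ℕ => M * (q / p) ^ j :=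
      (summable_geometric_of_lt_one (by positivity) ((div_lt_one hp).2 hqp)).mul_left M
    refine hgeom.of_norm_bounded fun j => ?_
    rw [smul_pow, norm_smul, Real.norm_of_nonneg (by positivity)]
    calc p⁻¹ ^ j * ‖P ^ j‖ ≤ p⁻¹ ^ j * (M * q ^ j) := by gcongr; exact hP j
      _ = M * (q / p) ^ j := by rw [div_pow, inv_pow]; ring
  have hfactor : algebraMap ℝ A p - P = p • (1 - p⁻¹ • P) := by
    rw [smul_sub, smul_inv_smul₀ hp.ne', Algebra.algebraMap_eq_smul_one]
  have hright : (algebraMap ℝ A p - P) * (p⁻¹ • ∑' j, (p⁻¹ • P) ^ j) = 1 := by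
    rw [hfactor, smul_mul_smul_comm, hsum.one_sub_mul_tsum_pow, mul_inv_cancel₀ hp.ne', one_smul]
  have hleft : (p⁻¹ • ∑' j, (p⁻¹ • P) ^ j) * (algebraMap ℝ A p - P) = 1 := by
    rw [hfactor, smul_mul_smul_comm, hsum.tsum_pow_mul_one_sub, inv_mul_cancel₀ hp.ne', one_smul]
  refine ⟨spectrum.mem_resolventSet_of_left_right_inverse hright hleft, ?_⟩
  have hres : resolvent P p = p⁻¹ • ∑' j, (p⁻¹ • P) ^ j :=
    Ring.inverse_unit ⟨_, _, hright, hleft⟩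
  rw [hres]
  refine (hsum.hasSum.const_smul p⁻¹).congr_fun fun j => ?_
  rw [smul_pow, smul_smul, pow_succ', mul_inv, inv_pow]

lemma norm_pow_mul_resolvent_pow_le [CompleteSpace A] (hq : 0 ≤ q) (hqp : q < p)
    (hP : ∀ m, ‖P ^ m‖ ≤ M * q ^ m) (n k : ℕ) :
    ‖P ^ k * resolvent P p ^ n‖ ≤ M * q ^ k / (p - q) ^ n := by
  have hp : 0 < p := hq.trans_lt hqp
  induction n generalizing k with
  | zero => simpa using hP k
  | succ n ih =>
    have hseries : HasSum (fun j => (p ^ (j + 1))⁻¹ • (P ^ (k + j) * resolvent P p ^ n))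
        (P ^ k * resolvent P p ^ (n + 1)) := by
      rw [pow_succ', ← mul_assoc]
      refine (((hasSum_resolvent_of_norm_pow_le hq hqp hP).2.mul_left (P ^ k)).mul_right
        (resolvent P p ^ n)).congr_fun fun j => ?_
      rw [mul_smul_comm, smul_mul_assoc, pow_add P]
    have hgeom : HasSum (fun j => M * q ^ k / (p - q) ^ n / p * (q / p) ^ j)
        (M * q ^ k / (p - q) ^ (n + 1)) := by
      have hne : p - q ≠ 0 := (sub_pos.2 hqp).ne'
      have hvalue : M * q ^ k / (p - q) ^ (n + 1)
          = M * q ^ k / (p - q) ^ n / p * (1 - q / p)⁻¹ := by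
        rw [one_sub_div hp.ne', pow_succ]; field_simp
      rw [hvalue]
      exact (hasSum_geometric_of_lt_one (by positivity) ((div_lt_one hp).2 hqp)).mul_left _
    refine hseries.norm_le_of_bounded hgeom fun j => ?_
    rw [norm_smul, Real.norm_of_nonneg (by positivity)]
    calc (p ^ (j + 1))⁻¹ * ‖P ^ (k + j) * resolvent P p ^ n‖
        ≤ (p ^ (j + 1))⁻¹ * (M * q ^ (k + j) / (p - q) ^ n) := by gcongr; exact ih (k + j)
      _ = M * q ^ k / (p - q) ^ n / p * (q / p) ^ j := by
        rw [div_pow, pow_add q, pow_succ]; field_simp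

end Resolvent

section PowerStable

lemma eventually_pos_and_one_add_mul_nonneg (b : ℝ) :
    ∀ᶠ h : ℝ in 𝓝[>] 0, 0 < h ∧ 0 ≤ 1 + b * h := by
  have hlim : Tendsto (fun h : ℝ => 1 + b * h) (𝓝[>] 0) (𝓝 (1 + b * 0)) :=
    ((continuous_const.add (continuous_const.mul continuous_id)).tendsto 0).mono_left
      nhdsWithin_le_nhds
  filter_upwards [self_mem_nhdsWithin, hlim.eventually_const_le (by norm_num : (0 : ℝ) < _)]
    with h hpos hnonneg using ⟨hpos, hnonneg⟩

variable {A : Type*} [NormedRing A] {F : ℝ → A} {M b μ : ℝ}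

/-- The stability condition of the Lax–Chernoff theory: for every small step `h`, the powers of the
one-step operator `F h` grow at most like `M (1 + b h) ^ m`. -/
def PowerStable (F : ℝ → A) (M b : ℝ) : Prop :=
  ∀ᶠ h in 𝓝[>] 0, ∀ m : ℕ, ‖F h ^ m‖ ≤ M * (1 + b * h) ^ m

lemma PowerStable.nonneg (hF : PowerStable F M b) : 0 ≤ M := by
  obtain ⟨h, hh⟩ := hF.exists
  simpa using (norm_nonneg _).trans (hh 0)

lemma PowerStable.eventually_norm_pow_le (hF : PowerStable F M b) (τ : ℝ) :
    ∀ᶠ h in 𝓝[>] 0, ∀ k : ℕ, k * h ≤ τ → ‖F h ^ k‖ ≤ M * Real.exp (|b| * τ) := by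
  filter_upwards [hF, eventually_pos_and_one_add_mul_nonneg b] with h hFh ⟨hpos, hnonneg⟩ k hk
  refine (hFh k).trans (mul_le_mul_of_nonneg_left ?_ hF.nonneg)
  calc (1 + b * h) ^ k ≤ Real.exp (b * h) ^ k := by
        gcongr; linarith [Real.add_one_le_exp (b * h)]
    _ = Real.exp (b * (k * h)) := by rw [← Real.exp_nat_mul]; congr 1; ring
    _ ≤ Real.exp (|b| * τ) := by
        gcongr
        exact le_abs_self b

variable [NormedAlgebra ℝ A]

/-- The difference quotient `(F h - 1) / h`, a bounded approximation of the derivative of `F`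
at `0` when `F 0 = 1`. -/
def discreteGenerator (F : ℝ → A) (h : ℝ) : A := h⁻¹ • (F h - 1)

lemma resolvent_discreteGenerator {h : ℝ} (hh : h ≠ 0) (hmem : 1 + μ * h ∈ resolventSet ℝ (F h)) :
    μ ∈ resolventSet ℝ (discreteGenerator F h) ∧
      resolvent (discreteGenerator F h) μ = h • resolvent (F h) (1 + μ * h) := by
  have hscale : algebraMap ℝ A μ - discreteGenerator F h
      = h⁻¹ • (algebraMap ℝ A (1 + μ * h) - F h) := by
    simp only [discreteGenerator, Algebra.algebraMap_eq_smul_one, add_smul, one_smul, smul_sub,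
      smul_add, smul_smul]
    rw [mul_comm μ, inv_mul_cancel_left₀ hh]
    abel
  have hright : (algebraMap ℝ A μ - discreteGenerator F h) * (h • resolvent (F h) (1 + μ * h))
      = 1 := by
    rw [hscale, smul_mul_smul_comm, inv_mul_cancel₀ hh, one_smul]
    exact Ring.mul_inverse_cancel _ hmem
  have hleft : (h • resolvent (F h) (1 + μ * h)) * (algebraMap ℝ A μ - discreteGenerator F h)
      = 1 := by
    rw [hscale, smul_mul_smul_comm, mul_inv_cancel₀ hh, one_smul]
    exact Ring.inverse_mul_cancel _ hmem
  exact ⟨spectrum.mem_resolventSet_of_left_right_inverse hright hleft,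
    Ring.inverse_unit ⟨_, _, hright, hleft⟩⟩

namespace PowerStable

lemma eventually_resolvent [CompleteSpace A] (hF : PowerStable F M b) (hμ : b < μ) :
    ∀ᶠ h in 𝓝[>] 0, μ ∈ resolventSet ℝ (discreteGenerator F h) ∧
      ∀ n, ‖resolvent (discreteGenerator F h) μ ^ n‖ ≤ M / (μ - b) ^ n := by
  filter_upwards [hF, eventually_pos_and_one_add_mul_nonneg b] with h hFh ⟨hpos, hnonneg⟩
  have hlt : 1 + b * h < 1 + μ * h := by gcongr
  obtain ⟨hmem, hres⟩ := resolvent_discreteGenerator hpos.ne'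
    (hasSum_resolvent_of_norm_pow_le hnonneg hlt hFh).1
  refine ⟨hmem, fun n => ?_⟩
  have hpow : ‖resolvent (F h) (1 + μ * h) ^ n‖ ≤ M / (1 + μ * h - (1 + b * h)) ^ n := by
    simpa using norm_pow_mul_resolvent_pow_le hnonneg hlt hFh n 0
  have hsub : μ - b ≠ 0 := (sub_pos.2 hμ).ne'
  calc ‖resolvent (discreteGenerator F h) μ ^ n‖ = h ^ n * ‖resolvent (F h) (1 + μ * h) ^ n‖ := by
        rw [hres, smul_pow, norm_smul, Real.norm_of_nonneg (by positivity)]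
    _ ≤ h ^ n * (M / (1 + μ * h - (1 + b * h)) ^ n) := by gcongr
    _ = M / (μ - b) ^ n := by
        rw [show 1 + μ * h - (1 + b * h) = (μ - b) * h by ring, mul_pow]
        field_simp

lemma eventually_norm_resolvent_le [CompleteSpace A] (hF : PowerStable F M b) (hμ : b < μ) :
    ∀ᶠ h in 𝓝[>] 0, ‖resolvent (discreteGenerator F h) μ‖ ≤ M / (μ - b) := by
  filter_upwards [hF.eventually_resolvent hμ] with h hh
  simpa using hh.2 1

end PowerStable

end PowerStable

section ResolventLimit

variable {E : Type*} [NormedAddCommGroup E] [NormedSpace ℝ E]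

lemma discreteGenerator_apply (F : ℝ → E →L[ℝ] E) (h : ℝ) (x : E) :
    discreteGenerator F h x = h⁻¹ • (F h x - x) := rfl

lemma discreteGenerator_pow_apply (F : ℝ → E →L[ℝ] E) (h : ℝ) (k : ℕ) (x : E) :
    discreteGenerator F h ((F h ^ k) x) = (F h ^ k) (discreteGenerator F h x) := by
  have hcomm : Commute (discreteGenerator F h) (F h ^ k) :=
    (((Commute.refl (F h)).sub_left (Commute.one_left _)).smul_left h⁻¹).pow_right k
  exact congrArg (fun T : E →L[ℝ] E => T x) hcomm.eq

lemma resolvent_apply_sub {T : E →L[ℝ] E} {μ : ℝ} (hμ : μ ∈ resolventSet ℝ T) (x : E) :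
    resolvent T μ (μ • x - T x) = x :=
  congrArg (fun L : E →L[ℝ] E => L x) (Ring.inverse_mul_cancel _ hμ)

lemma apply_resolvent {T : E →L[ℝ] E} {μ : ℝ} (hμ : μ ∈ resolventSet ℝ T) (x : E) :
    T (resolvent T μ x) = μ • resolvent T μ x - x := by
  have hright : μ • resolvent T μ x - T (resolvent T μ x) = x :=
    congrArg (fun L : E →L[ℝ] E => L x) (Ring.mul_inverse_cancel _ hμ)
  rw [eq_sub_iff_add_eq, ← eq_sub_iff_add_eq', hright]

/-- `R` is the resolvent at `μ` of the (possibly unbounded) operator with graph `Γ`, that is, a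
bounded two-sided inverse of `μ - Γ`. Graphs make closures and cores directly accessible. -/
structure IsResolventOf (Γ : Submodule ℝ (E × E)) (μ : ℝ) (R : E →L[ℝ] E) : Prop where
  left_inv : ∀ p ∈ Γ, R (μ • p.1 - p.2) = p.1
  mem : ∀ y, (R y, μ • R y - y) ∈ Γ

lemma isResolventOf_topologicalClosure {G : Submodule ℝ (E × E)} {μ : ℝ} {R : E →L[ℝ] E}
    (hleft : ∀ p ∈ G, R (μ • p.1 - p.2) = p.1)
    (hD : Dense ((fun p : E × E => μ • p.1 - p.2) '' G)) :
    IsResolventOf G.topologicalClosure μ R where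
  left_inv := by
    have hclosed : IsClosed {p : E × E | R (μ • p.1 - p.2) = p.1} :=
      isClosed_eq (by fun_prop) continuous_fst
    exact closure_minimal hleft hclosed
  mem y := by
    have hclosed : IsClosed {y | (R y, μ • R y - y) ∈ G.topologicalClosure} :=
      G.isClosed_topologicalClosure.preimage (by fun_prop)
    refine hclosed.closure_subset_iff.2 ?_ (hD y)
    rintro _ ⟨p, hp, rfl⟩
    simpa [hleft p hp] using G.le_topologicalClosure hp

variable [CompleteSpace E] {F : ℝ → E →L[ℝ] E} {G : Submodule ℝ (E × E)} {M b μ : ℝ}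

lemma PowerStable.tendsto_resolvent_apply (hF : PowerStable F M b) (hμ : b < μ) {x y : E}
    (hxy : Tendsto (fun h => discreteGenerator F h x) (𝓝[>] 0) (𝓝 y)) :
    Tendsto (fun h => resolvent (discreteGenerator F h) μ (μ • x - y)) (𝓝[>] 0) (𝓝 x) := by
  have herr : Tendsto (fun h => resolvent (discreteGenerator F h) μ (discreteGenerator F h x - y))
      (𝓝[>] 0) (𝓝 0) :=
    tendsto_clm_apply (hF.eventually_norm_resolvent_le hμ) (y := 0) (by simp)
      (by simpa using hxy.sub_const y)
  have hsum := herr.const_add x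
  rw [add_zero] at hsum
  refine hsum.congr' ?_
  filter_upwards [hF.eventually_resolvent hμ] with h hh
  rw [← sub_add_sub_cancel (μ • x) (discreteGenerator F h x) y, map_add,
    resolvent_apply_sub hh.1]

theorem PowerStable.exists_isResolventOf (hF : PowerStable F M b) (hμ : b < μ)
    (hG : ∀ p ∈ G, Tendsto (fun h => discreteGenerator F h p.1) (𝓝[>] 0) (𝓝 p.2))
    (hD : Dense ((fun p : E × E => μ • p.1 - p.2) '' G)) :
    ∃ R : E →L[ℝ] E, IsResolventOf G.topologicalClosure μ R ∧
      (∀ n, ‖R ^ n‖ ≤ M / (μ - b) ^ n) ∧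
      ∀ x, Tendsto (fun h => resolvent (discreteGenerator F h) μ x) (𝓝[>] 0) (𝓝 (R x)) := by
  have hbound := hF.eventually_norm_resolvent_le hμ
  obtain ⟨R, hR⟩ := exists_clm_tendsto_of_dense hbound hD <| by
    rintro _ ⟨p, hp, rfl⟩
    exact (hF.tendsto_resolvent_apply hμ (hG p hp)).cauchy_map
  have hleft : ∀ p ∈ G, R (μ • p.1 - p.2) = p.1 := fun p hp =>
    tendsto_nhds_unique (hR _) (hF.tendsto_resolvent_apply hμ (hG p hp))
  have hpow : ∀ n x, Tendsto (fun h => (resolvent (discreteGenerator F h) μ ^ n) x) (𝓝[>] 0)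
      (𝓝 ((R ^ n) x)) := by
    intro n x
    induction n with
    | zero => simp
    | succ n ih =>
      simp only [pow_succ', mul_apply_eq_comp]
      exact tendsto_clm_apply hbound (hR _) ih
  refine ⟨R, isResolventOf_topologicalClosure hleft hD, fun n => ?_, hR⟩
  refine norm_le_of_tendsto_clm_apply ?_ (hpow n)
  filter_upwards [hF.eventually_resolvent hμ] with h hh using hh.2 n

end ResolventLimit

section Semigroup

variable {H : Type*} [NormedAddCommGroup H] [InnerProductSpace ℝ H] {F S T : ℝ → H →L[ℝ] H}
  {x y z : H}

lemma derivAtZero_iff (h0 : F 0 = 1) :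
    DerivAtZero F x y ↔ Tendsto (fun h => discreteGenerator F h x) (𝓝[>] 0) (𝓝 y) := by
  simp [DerivAtZero, discreteGenerator_apply, h0]

lemma DerivAtZero.mul {K : ℝ} (hS0 : S 0 = 1) (hT0 : T 0 = 1)
    (hK : ∀ᶠ r in 𝓝[>] 0, ‖S r‖ ≤ K) (hSz : Tendsto (fun r => S r z) (𝓝[>] 0) (𝓝 z))
    (hS : DerivAtZero S x y) (hT : DerivAtZero T x z) :
    DerivAtZero (fun r => S r * T r) x (y + z) := by
  rw [derivAtZero_iff (by simp [hS0, hT0])]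
  rw [derivAtZero_iff hS0] at hS
  rw [derivAtZero_iff hT0] at hT
  refine (hS.add (tendsto_clm_apply hK hSz hT)).congr fun r => ?_
  simp only [discreteGenerator_apply, mul_apply_eq_comp, map_smul, map_sub, ← smul_add]
  abel_nf

lemma DerivAtZero.sub {x' y' : H} (h : DerivAtZero F x y) (h' : DerivAtZero F x' y') :
    DerivAtZero F (x - x') (y - y') := by
  refine (Tendsto.sub h h').congr fun r => ?_
  simp only [map_sub, ← smul_sub]
  abel_nf

lemma mul_exp_mul_le_mul_exp_abs_mul {M w s τ : ℝ} (hM : 0 ≤ M) (hs : 0 ≤ s) (hsτ : s ≤ τ) :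
    M * Real.exp (w * s) ≤ M * Real.exp (|w| * τ) := by
  gcongr
  exact le_abs_self w

namespace IsC0Semigroup

lemma map_zero (hS : IsC0Semigroup S) : S 0 = 1 := hS.1

lemma apply_add (hS : IsC0Semigroup S) {a b : ℝ} (ha : 0 ≤ a) (hb : 0 ≤ b) (x : H) :
    S (a + b) x = S a (S b x) := by
  rw [hS.2.1 a b ha hb, mul_apply_eq_comp]

lemma apply_comm (hS : IsC0Semigroup S) {a b : ℝ} (ha : 0 ≤ a) (hb : 0 ≤ b) (x : H) :
    S a (S b x) = S b (S a x) := by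
  rw [← hS.apply_add ha hb, add_comm, hS.apply_add hb ha]

lemma continuousOn (hS : IsC0Semigroup S) (x : H) : ContinuousOn (fun s => S s x) (Set.Ici 0) :=
  hS.2.2.1 x

lemma exists_norm_le (hS : IsC0Semigroup S) (τ : ℝ) : ∃ K, ∀ s, 0 ≤ s → s ≤ τ → ‖S s‖ ≤ K := by
  obtain ⟨-, -, -, M, hM, w, hbound⟩ := hS
  exact ⟨M * Real.exp (|w| * τ), fun s hs hsτ => (hbound s hs).trans
    (mul_exp_mul_le_mul_exp_abs_mul (zero_le_one.trans hM) hs hsτ)⟩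

lemma exists_eventually_norm_le (hS : IsC0Semigroup S) : ∃ K, ∀ᶠ r in 𝓝[>] 0, ‖S r‖ ≤ K := by
  obtain ⟨K, hK⟩ := hS.exists_norm_le 1
  refine ⟨K, ?_⟩
  filter_upwards [Ioo_mem_nhdsGT one_pos] with r hr using hK r hr.1.le hr.2.le

lemma tendsto_zero (hS : IsC0Semigroup S) (x : H) :
    Tendsto (fun s => S s x) (𝓝[>] 0) (𝓝 x) := by
  have hcont : Tendsto (fun s => S s x) (𝓝[≥] 0) (𝓝 (S 0 x)) := hS.continuousOn x 0 Set.self_mem_Ici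
  rw [hS.map_zero] at hcont
  exact hcont.mono_left (nhdsWithin_mono _ Set.Ioi_subset_Ici_self)

lemma derivAtZero_apply (hS : IsC0Semigroup S) (h : DerivAtZero S x y) {r : ℝ} (hr : 0 ≤ r) :
    DerivAtZero S (S r x) (S r y) := by
  rw [derivAtZero_iff hS.map_zero] at h ⊢
  refine (((S r).continuous.tendsto y).comp h).congr' ?_
  filter_upwards [self_mem_nhdsWithin] with u hu
  simp [discreteGenerator_apply, hS.apply_comm (Set.mem_Ioi.1 hu).le hr]

lemma hasDerivWithinAt (hS : IsC0Semigroup S) (h : DerivAtZero S x y) {r : ℝ} (hr : 0 ≤ r) :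
    HasDerivWithinAt (fun s => S s x) (S r y) (Set.Ici r) r := by
  rw [← hasDerivWithinAt_Ioi_iff_Ici, hasDerivWithinAt_iff_tendsto_slope' (by simp)]
  have hshift : Tendsto (fun u : ℝ => u - r) (𝓝[>] r) (𝓝[>] 0) := by
    have h0 := (continuous_sub_right r).continuousWithinAt.tendsto_nhdsWithin
      (s := Set.Ioi r) (t := Set.Ioi 0) (x := r) fun u hu => sub_pos.2 hu
    rwa [sub_self] at h0
  refine (((derivAtZero_iff hS.map_zero).1 (hS.derivAtZero_apply h hr)).comp hshift).congr' ?_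
  filter_upwards [self_mem_nhdsWithin] with u hu
  have hsplit : S (u - r) (S r x) = S u x := by
    rw [← hS.apply_add (sub_nonneg.2 (Set.mem_Ioi.1 hu).le) hr, sub_add_cancel]
  simp [slope, discreteGenerator_apply, hsplit]

end IsC0Semigroup

lemma eq_zero_of_deriv_eq_mul_of_exp_bound {φ : ℝ → ℝ} {μ w K : ℝ}
    (hcont : ContinuousOn φ (Set.Ici 0))
    (hderiv : ∀ r, 0 ≤ r → HasDerivWithinAt φ (μ * φ r) (Set.Ici r) r) (hw : w < μ)
    (hbound : ∀ r, 0 ≤ r → |φ r| ≤ K * Real.exp (w * r)) : φ 0 = 0 := by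
  have hconst : ∀ r, 0 ≤ r → Real.exp (-μ * r) * φ r = φ 0 := by
    intro r hr
    have h := constant_of_has_deriv_right_zero (f := fun r => Real.exp (-μ * r) * φ r)
      (a := 0) (b := r) (ContinuousOn.mul (by fun_prop) (hcont.mono Set.Icc_subset_Ici_self)) ?_
      r ⟨hr, le_rfl⟩
    · simpa using h
    · intro u hu
      have hexp : HasDerivAt (fun r => Real.exp (-μ * r)) (Real.exp (-μ * u) * (-μ)) u := by
        simpa using ((hasDerivAt_id u).const_mul (-μ)).exp
      exact (hexp.hasDerivWithinAt.mul (hderiv u hu.1)).congr_deriv (by ring)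
  have hlim : Tendsto (fun r => K * Real.exp ((w - μ) * r)) atTop (𝓝 0) := by
    have hneg : Tendsto (fun r => (w - μ) * r) atTop atBot :=
      tendsto_id.const_mul_atTop_of_neg (by linarith)
    simpa using (Real.tendsto_exp_atBot.comp hneg).const_mul K
  refine abs_nonpos_iff.1 (ge_of_tendsto hlim ?_)
  filter_upwards [eventually_ge_atTop 0] with r hr
  calc |φ 0| = Real.exp (-μ * r) * |φ r| := by
        rw [← hconst r hr, abs_mul, abs_of_pos (Real.exp_pos _)]
    _ ≤ Real.exp (-μ * r) * (K * Real.exp (w * r)) := by gcongr; exact hbound r hr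
    _ = K * Real.exp ((w - μ) * r) := by
        rw [mul_left_comm, ← Real.exp_add]; congr 2; ring

lemma IsC0Semigroup.inner_eq_zero_of_inner_deriv (hS : IsC0Semigroup S) {M w μ : ℝ}
    (hbound : ∀ s : ℝ, 0 ≤ s → ‖S s‖ ≤ M * Real.exp (w * s)) (hw : w < μ) {g : H}
    (hxy : DerivAtZero S x y) (hg : ∀ r, 0 ≤ r → ⟪S r y, g⟫_ℝ = μ * ⟪S r x, g⟫_ℝ) :
    ⟪x, g⟫_ℝ = 0 := by
  have h0 : ⟪S 0 x, g⟫_ℝ = 0 := by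
    refine eq_zero_of_deriv_eq_mul_of_exp_bound (φ := fun r => ⟪S r x, g⟫_ℝ)
      (K := M * ‖x‖ * ‖g‖) ((hS.continuousOn x).inner (𝕜 := ℝ) continuousOn_const)
      (fun r hr => ?_) hw fun r hr => ?_
    · simpa [← hg r hr] using
        (hS.hasDerivWithinAt hxy hr).inner ℝ (hasDerivWithinAt_const r (Set.Ici r) g)
    · calc |⟪S r x, g⟫_ℝ| ≤ ‖S r x‖ * ‖g‖ := abs_real_inner_le_norm _ _
        _ ≤ M * Real.exp (w * r) * ‖x‖ * ‖g‖ := by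
          gcongr; exact (S r).le_of_opNorm_le (hbound r hr) x
        _ = M * ‖x‖ * ‖g‖ * Real.exp (w * r) := by ring
  simpa [hS.map_zero] using h0

/-- `Γ` is the graph of the generator of `S`. -/
def IsGeneratorGraph (S : ℝ → H →L[ℝ] H) (Γ : Submodule ℝ (H × H)) : Prop :=
  ∀ x y, DerivAtZero S x y ↔ (x, y) ∈ Γ

lemma IsC0Semigroup.isGeneratorGraph_of_isResolventOf {Γ : Submodule ℝ (H × H)} {M w μ : ℝ}
    {R : H →L[ℝ] H} (hS : IsC0Semigroup S)
    (hbound : ∀ s : ℝ, 0 ≤ s → ‖S s‖ ≤ M * Real.exp (w * s)) (hw : w < μ)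
    (hΓ : ∀ p ∈ Γ, DerivAtZero S p.1 p.2) (hR : IsResolventOf Γ μ R) : IsGeneratorGraph S Γ := by
  refine fun x y => ⟨fun hxy => ?_, fun hp => hΓ _ hp⟩
  have hmem := hR.mem (μ • x - y)
  have hsub := DerivAtZero.sub hxy (hΓ _ hmem)
  have heig : y - (μ • R (μ • x - y) - (μ • x - y)) = μ • (x - R (μ • x - y)) := by
    rw [smul_sub]; abel
  have hzero : x - R (μ • x - y) = 0 := by
    refine inner_self_eq_zero.1
      (hS.inner_eq_zero_of_inner_deriv hbound hw hsub fun r _ => ?_)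
    simp only [heig, map_smul, inner_smul_left, RCLike.conj_to_real]
  rw [← sub_eq_zero.1 hzero] at hmem
  simpa using hmem

end Semigroup

section Adjoint

variable {H : Type*} [NormedAddCommGroup H] [InnerProductSpace ℝ H] {F S T : ℝ → H →L[ℝ] H}
  {g g' v x y : H}

/-- `(g, g')` lies in the graph of the adjoint of the strong derivative of `S` at `0`. -/
def AdjointDerivAtZero (S : ℝ → H →L[ℝ] H) (g g' : H) : Prop :=
  ∀ x y, DerivAtZero S x y → ⟪y, g⟫_ℝ = ⟪x, g'⟫_ℝ

variable [CompleteSpace H]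

lemma adjoint_one : (1 : H →L[ℝ] H)† = 1 := star_one _

lemma inner_discreteGenerator (F : ℝ → H →L[ℝ] H) (h : ℝ) (x g : H) :
    ⟪discreteGenerator F h x, g⟫_ℝ = ⟪x, discreteGenerator (fun r => (F r)†) h g⟫_ℝ := by
  simp [discreteGenerator_apply, inner_smul_left, inner_smul_right, inner_sub_left,
    inner_sub_right, ContinuousLinearMap.adjoint_inner_right]

lemma derivAtZero_adjoint_iff (h0 : F 0 = 1) : DerivAtZero (fun r => (F r)†) g g' ↔
    Tendsto (fun h => discreteGenerator (fun r => (F r)†) h g) (𝓝[>] 0) (𝓝 g') :=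
  derivAtZero_iff (by simp only [h0, adjoint_one])

lemma inner_eq_of_derivAtZero_adjoint (h0 : F 0 = 1) (hxy : DerivAtZero F x y)
    (hg : DerivAtZero (fun r => (F r)†) g g') : ⟪y, g⟫_ℝ = ⟪x, g'⟫_ℝ :=
  tendsto_nhds_unique (((derivAtZero_iff h0).1 hxy).inner tendsto_const_nhds)
    ((tendsto_const_nhds.inner ((derivAtZero_adjoint_iff h0).1 hg)).congr fun h =>
      (inner_discreteGenerator F h x g).symm)

namespace IsC0Semigroup

lemma abs_inner_sub_le (hS : IsC0Semigroup S) (hg : AdjointDerivAtZero S g g')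
    (hxy : DerivAtZero S x y) {r ε : ℝ} (hr : 0 ≤ r)
    (hε : ∀ ρ, 0 ≤ ρ → ρ ≤ r → ‖((S ρ)†) g' - v‖ ≤ ε) :
    |⟪x, ((S r)†) g - g - r • v⟫_ℝ| ≤ ε * r * ‖x‖ := by
  have hmvt := norm_image_sub_le_of_norm_deriv_right_le_segment
    (f := fun ρ => ⟪S ρ x, g⟫_ℝ - ρ * ⟪x, v⟫_ℝ) (f' := fun ρ => ⟪S ρ y, g⟫_ℝ - 1 * ⟪x, v⟫_ℝ)
    (a := 0) (b := r) (C := ε * ‖x‖) ?_ ?_ ?_ r ⟨hr, le_rfl⟩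
  · simp only [hS.map_zero, zero_mul, sub_zero, Real.norm_eq_abs, one_apply_eq_self]
      at hmvt
    rw [inner_sub_right, inner_sub_right, ContinuousLinearMap.adjoint_inner_right,
      inner_smul_right]
    convert hmvt using 1
    · congr 1; ring
    · ring
  · exact (((hS.continuousOn x).mono Set.Icc_subset_Ici_self).inner (𝕜 := ℝ) continuousOn_const).sub
      (by fun_prop)
  · intro ρ hρ
    refine HasDerivWithinAt.sub ?_ ((hasDerivAt_id ρ).mul_const _).hasDerivWithinAt
    simpa using (hS.hasDerivWithinAt hxy hρ.1).inner ℝ (hasDerivWithinAt_const ρ (Set.Ici ρ) g)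
  · intro ρ hρ
    have heq : ⟪S ρ y, g⟫_ℝ - 1 * ⟪x, v⟫_ℝ = ⟪x, ((S ρ)†) g' - v⟫_ℝ := by
      rw [hg _ _ (hS.derivAtZero_apply hxy hρ.1), inner_sub_right,
        ContinuousLinearMap.adjoint_inner_right, one_mul]
    rw [heq, mul_comm]
    exact (norm_inner_le_norm _ _).trans (by gcongr; exact hε ρ hρ.1 hρ.2.le)

lemma norm_adjoint_sub_le (hS : IsC0Semigroup S) (hd : Dense {x | ∃ y, DerivAtZero S x y})
    (hg : AdjointDerivAtZero S g g') {r ε : ℝ} (hr : 0 ≤ r)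
    (hε : ∀ ρ, 0 ≤ ρ → ρ ≤ r → ‖((S ρ)†) g' - v‖ ≤ ε) :
    ‖((S r)†) g - g - r • v‖ ≤ ε * r := by
  have hε0 : 0 ≤ ε := (norm_nonneg _).trans (hε 0 le_rfl hr)
  rw [← innerSL_apply_norm (𝕜 := ℝ)]
  refine ContinuousLinearMap.opNorm_le_bound _ (by positivity) fun x => ?_
  have hclosed : IsClosed {x : H | |⟪x, ((S r)†) g - g - r • v⟫_ℝ| ≤ ε * r * ‖x‖} :=
    isClosed_le (by fun_prop) (by fun_prop)
  rw [innerSL_apply_apply, real_inner_comm]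
  refine hclosed.closure_subset_iff.2 ?_ (hd x)
  rintro x ⟨y, hxy⟩
  exact hS.abs_inner_sub_le hg hxy hr hε

lemma tendsto_adjoint_zero (hS : IsC0Semigroup S) (hd : Dense {x | ∃ y, DerivAtZero S x y})
    (hE : Dense {g | ∃ g', AdjointDerivAtZero S g g'}) (v : H) :
    Tendsto (fun r => ((S r)†) v) (𝓝[>] 0) (𝓝 v) := by
  obtain ⟨K, hK⟩ := hS.exists_norm_le 1
  have hK' : ∀ r, 0 ≤ r → r ≤ 1 → ‖(S r)†‖ ≤ K := fun r h0 h1 => by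
    rw [LinearIsometryEquiv.norm_map]; exact hK r h0 h1
  have hI : ∀ᶠ r : ℝ in 𝓝[>] 0, 0 < r ∧ r < 1 := Ioo_mem_nhdsGT one_pos
  refine tendsto_clm_apply_of_dense (L := 1) (K := K) ?_ hE ?_ v
  · filter_upwards [hI] with r hr using hK' r hr.1.le hr.2.le
  · rintro g ⟨g', hg⟩
    have hlin : Tendsto (fun r : ℝ => K * ‖g'‖ * r) (𝓝[>] 0) (𝓝 0) :=
      (Continuous.tendsto' (by fun_prop) 0 0 (mul_zero _)).mono_left nhdsWithin_le_nhds
    refine tendsto_sub_nhds_zero_iff.1 (squeeze_zero_norm' ?_ hlin)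
    filter_upwards [hI] with r hr
    have hest := hS.norm_adjoint_sub_le hd hg hr.1.le (v := 0) (ε := K * ‖g'‖) fun ρ h0 hρ => by
      rw [sub_zero]
      exact ContinuousLinearMap.le_of_opNorm_le _ (hK' ρ h0 (hρ.trans hr.2.le)) g'
    simpa using hest

lemma derivAtZero_adjoint (hS : IsC0Semigroup S) (hd : Dense {x | ∃ y, DerivAtZero S x y})
    (hE : Dense {g | ∃ g', AdjointDerivAtZero S g g'}) (hg : AdjointDerivAtZero S g g') :
    DerivAtZero (fun r => (S r)†) g g' := by
  have h0 : (S 0)† = 1 := by rw [hS.map_zero, adjoint_one]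
  rw [derivAtZero_iff (F := fun r => (S r)†) h0, Metric.tendsto_nhds]
  intro ε hε
  have hnear := Metric.tendsto_nhds.1 (hS.tendsto_adjoint_zero hd hE g') (ε / 2) (half_pos hε)
  rw [eventually_nhdsWithin_iff, Metric.eventually_nhds_iff] at hnear
  obtain ⟨δ, hδ, hnear⟩ := hnear
  filter_upwards [Ioo_mem_nhdsGT hδ] with r ⟨hr, hrδ⟩
  have hest := hS.norm_adjoint_sub_le hd hg hr.le (v := g') (ε := ε / 2) fun ρ hρ hρr => by
    rcases hρ.eq_or_lt with rfl | hρ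
    · simpa [h0] using (half_pos hε).le
    · rw [← dist_eq_norm]
      exact (hnear (by simpa [abs_of_pos hρ] using hρr.trans_lt hrδ) hρ).le
  have hscale : discreteGenerator (fun r => (S r)†) r g - g'
      = r⁻¹ • (((S r)†) g - g - r • g') := by
    rw [discreteGenerator_apply, smul_sub _ _ (r • g'), inv_smul_smul₀ hr.ne']
  calc dist (discreteGenerator (fun r => (S r)†) r g) g'
      = r⁻¹ * ‖((S r)†) g - g - r • g'‖ := by
        rw [dist_eq_norm, hscale, norm_smul, Real.norm_of_nonneg (inv_nonneg.2 hr.le)]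
    _ ≤ r⁻¹ * (ε / 2 * r) := by gcongr
    _ < ε := by field_simp; linarith

end IsC0Semigroup

lemma IsC0Semigroup.derivAtZero_adjoint_mul (hS : IsC0Semigroup S) (hT : IsC0Semigroup T)
    (hdS : Dense {x | ∃ y, DerivAtZero S x y}) (hdT : Dense {x | ∃ y, DerivAtZero T x y})
    (hE : Dense {g | (∃ u, AdjointDerivAtZero S g u) ∧ ∃ v, AdjointDerivAtZero T g v})
    {u v : H} (hgS : AdjointDerivAtZero S g u) (hgT : AdjointDerivAtZero T g v) :
    DerivAtZero (fun r => (S r * T r)†) g (v + u) := by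
  have hES : Dense {g | ∃ u, AdjointDerivAtZero S g u} := hE.mono fun g hg => hg.1
  have hET : Dense {g | ∃ v, AdjointDerivAtZero T g v} := hE.mono fun g hg => hg.2
  obtain ⟨K, hK⟩ := hT.exists_eventually_norm_le
  have hmul : (fun r => (S r * T r)†) = fun r => (T r)† * (S r)† := funext fun r => star_mul _ _
  rw [hmul]
  refine DerivAtZero.mul (K := K) (by simp only [hT.map_zero, adjoint_one])
    (by simp only [hS.map_zero, adjoint_one]) ?_ (hT.tendsto_adjoint_zero hdT hET u)
    (hT.derivAtZero_adjoint hdT hET hgT) (hS.derivAtZero_adjoint hdS hES hgS)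
  filter_upwards [hK] with r hr
  rwa [LinearIsometryEquiv.norm_map]

end Adjoint

section Exponential

open NormedSpace (exp)

section Norm

variable {A : Type*} [NormedRing A] [NormedAlgebra ℝ A] [CompleteSpace A] {P : A} {M q τ : ℝ}

lemma norm_exp_smul_le (hτ : 0 ≤ τ) (hP : ∀ n, ‖P ^ n‖ ≤ M * q ^ n) :
    ‖exp (τ • P)‖ ≤ M * Real.exp (τ * q) := by
  have hexp := NormedSpace.exp_series_hasSum_exp' (𝕂 := ℝ) (τ • P)
  have hbound := (NormedSpace.exp_series_hasSum_exp' (𝕂 := ℝ) (τ * q)).mul_left M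
  rw [← Real.exp_eq_exp_ℝ] at hbound
  refine hexp.norm_le_of_bounded hbound fun n => ?_
  rw [smul_pow, norm_smul, norm_smul, Real.norm_of_nonneg (by positivity),
    Real.norm_of_nonneg (by positivity), smul_eq_mul, mul_pow]
  calc (n.factorial : ℝ)⁻¹ * (τ ^ n * ‖P ^ n‖)
      ≤ (n.factorial : ℝ)⁻¹ * (τ ^ n * (M * q ^ n)) := by gcongr; exact hP n
    _ = M * ((n.factorial : ℝ)⁻¹ * (τ ^ n * q ^ n)) := by ring

lemma norm_exp_smul_sub_one_le (hτ : 0 ≤ τ) (hP : ∀ n, ‖P ^ n‖ ≤ M * q ^ n) :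
    ‖exp (τ • (P - 1))‖ ≤ M * Real.exp (τ * (q - 1)) := by
  let _ : NormedAlgebra ℚ A := NormedAlgebra.restrictScalars ℚ ℝ _
  have hsplit : τ • (P - 1) = algebraMap ℝ A (-τ) + τ • P := by
    rw [Algebra.algebraMap_eq_smul_one, smul_sub, neg_smul, neg_add_eq_sub]
  rw [hsplit, NormedSpace.exp_add_of_commute (Algebra.commutes _ _),
    ← NormedSpace.algebraMap_exp_comm, Algebra.algebraMap_eq_smul_one, smul_mul_assoc, one_mul,
    norm_smul, ← Real.exp_eq_exp_ℝ, Real.norm_of_nonneg (Real.exp_nonneg _)]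
  calc Real.exp (-τ) * ‖exp (τ • P)‖ ≤ Real.exp (-τ) * (M * Real.exp (τ * q)) := by
        gcongr; exact norm_exp_smul_le hτ hP
    _ = M * Real.exp (τ * (q - 1)) := by
        rw [mul_left_comm, ← Real.exp_add]; congr 2; ring

end Norm

variable {E : Type*} [NormedAddCommGroup E] [NormedSpace ℝ E] [CompleteSpace E]
  {K τ s : ℝ} {x y : E}

lemma hasDerivAt_exp_smul_apply (Y : E →L[ℝ] E) (x : E) (r : ℝ) :
    HasDerivAt (fun s : ℝ => exp (s • Y) x) (exp (r • Y) (Y x)) r := by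
  let _ : NormedAlgebra ℚ (E →L[ℝ] E) := NormedAlgebra.restrictScalars ℚ ℝ _
  refine ((hasDerivAt_exp_smul_const (𝕂 := ℝ) Y r).clm_apply (hasDerivAt_const r x)).congr_deriv ?_
  simp

lemma norm_exp_smul_apply_sub_le {Y Z : E →L[ℝ] E} (hYZ : Commute Y Z)
    (hY : ∀ s ∈ Set.Icc 0 τ, ‖exp (s • Y)‖ ≤ K) (hZ : ∀ s ∈ Set.Icc 0 τ, ‖exp (s • Z)‖ ≤ K)
    (hs : s ∈ Set.Icc 0 τ) (x : E) :
    ‖exp (s • Z) x - exp (s • Y) x‖ ≤ K * (K * ‖Z x - Y x‖) * s := by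
  let _ : NormedAlgebra ℚ (E →L[ℝ] E) := NormedAlgebra.restrictScalars ℚ ℝ _
  have hderiv : ∀ r : ℝ, HasDerivAt (fun r => (exp ((s - r) • Y) * exp (r • Z)) x)
      (exp ((s - r) • Y) (exp (r • Z) (Z x - Y x))) r := by
    intro r
    have hYr : HasDerivAt (fun r : ℝ => exp ((s - r) • Y)) ((-1 : ℝ) • (exp ((s - r) • Y) * Y)) r :=
      (hasDerivAt_exp_smul_const (𝕂 := ℝ) Y (s - r)).scomp r
        (by simpa using (hasDerivAt_id r).const_sub s)
    refine ((hYr.mul (hasDerivAt_exp_smul_const (𝕂 := ℝ) Z r)).clm_apply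
      (hasDerivAt_const r x)).congr_deriv ?_
    have hcomm : Y * exp (r • Z) = exp (r • Z) * Y := (hYZ.smul_right r).exp_right.eq
    rw [neg_one_smul, neg_mul, mul_assoc, hcomm]
    simp only [map_zero, add_zero, map_sub, add_apply,
      neg_apply, mul_apply_eq_comp]
    abel
  have hmvt := norm_image_sub_le_of_norm_deriv_right_le_segment (a := 0) (b := s)
    (C := K * (K * ‖Z x - Y x‖)) (fun r _ => (hderiv r).continuousAt.continuousWithinAt)
    (fun r _ => (hderiv r).hasDerivWithinAt) (fun r hr => ?_) s ⟨hs.1, le_rfl⟩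
  · simpa using hmvt
  · have hYr := hY (s - r) ⟨by linarith [hr.2], by linarith [hr.1, hs.2]⟩
    refine (ContinuousLinearMap.le_of_opNorm_le _ hYr _).trans ?_
    gcongr
    · exact (norm_nonneg _).trans hYr
    · exact ContinuousLinearMap.le_of_opNorm_le _ (hZ r ⟨hr.1, (hr.2.trans_le hs.2).le⟩) _

variable {Y : ℕ → E →L[ℝ] E}

lemma cauchySeq_exp_smul_apply (hcomm : ∀ m n, Commute (Y m) (Y n))
    (hK : ∀ n, ∀ s ∈ Set.Icc 0 τ, ‖exp (s • Y n)‖ ≤ K) (hs : s ∈ Set.Icc 0 τ)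
    (hx : CauchySeq fun n => Y n x) : CauchySeq fun n => exp (s • Y n) x := by
  rw [cauchySeq_iff_tendsto_dist_atTop_0] at hx ⊢
  have hlim := (hx.const_mul K).const_mul K |>.mul_const s
  simp only [mul_zero, zero_mul] at hlim
  refine squeeze_zero (fun _ => dist_nonneg) (fun p => ?_) hlim
  simpa only [dist_eq_norm] using norm_exp_smul_apply_sub_le (hcomm p.2 p.1) (hK p.2) (hK p.1) hs x

lemma norm_exp_smul_apply_sub_exp_smul_apply_le {Y : E →L[ℝ] E}
    (hK : ∀ s ∈ Set.Icc 0 τ, ‖exp (s • Y)‖ ≤ K) {r : ℝ} (hr : r ∈ Set.Icc 0 τ)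
    (hs : s ∈ Set.Icc 0 τ) (x : E) :
    ‖exp (s • Y) x - exp (r • Y) x‖ ≤ K * ‖Y x‖ * ‖s - r‖ :=
  (convex_Icc 0 τ).norm_image_sub_le_of_norm_hasDerivWithin_le
    (fun u _ => (hasDerivAt_exp_smul_apply Y x u).hasDerivWithinAt)
    (fun u hu => ContinuousLinearMap.le_of_opNorm_le _ (hK u hu) _) hr hs

variable {S : ℝ → E →L[ℝ] E}

lemma continuousOn_of_tendsto_exp_smul (hK : ∀ n, ∀ s ∈ Set.Icc 0 τ, ‖exp (s • Y n)‖ ≤ K)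
    (hS : ∀ s, 0 ≤ s → ∀ x, Tendsto (fun n => exp (s • Y n) x) atTop (𝓝 (S s x)))
    (hxy : Tendsto (fun n => Y n x) atTop (𝓝 y)) :
    ContinuousOn (fun s => S s x) (Set.Icc 0 τ) := by
  have hlip : ∀ s ∈ Set.Icc 0 τ, ∀ r ∈ Set.Icc 0 τ, dist (S s x) (S r x) ≤ K * ‖y‖ * dist s r := by
    intro s hs r hr
    simp only [dist_eq_norm]
    exact le_of_tendsto_of_tendsto' ((hS s hs.1 x).sub (hS r hr.1 x)).norm
      ((hxy.norm.const_mul K).mul_const _) fun n =>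
        norm_exp_smul_apply_sub_exp_smul_apply_le (hK n) hr hs x
  exact (LipschitzOnWith.of_dist_le' hlip).continuousOn

lemma apply_sub_eq_integral_of_tendsto_exp_smul (hτ : 0 ≤ τ)
    (hK : ∀ n, ∀ s ∈ Set.Icc 0 τ, ‖exp (s • Y n)‖ ≤ K)
    (hS : ∀ s, 0 ≤ s → ∀ x, Tendsto (fun n => exp (s • Y n) x) atTop (𝓝 (S s x)))
    (hxy : Tendsto (fun n => Y n x) atTop (𝓝 y)) :
    S τ x - x = ∫ r in 0..τ, S r y := by
  have hcont : ∀ n, Continuous fun r : ℝ => exp (r • Y n) (Y n x) := fun n =>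
    continuous_iff_continuousAt.2 fun r => (hasDerivAt_exp_smul_apply (Y n) (Y n x) r).continuousAt
  have hftc : ∀ n, ∫ r in 0..τ, exp (r • Y n) (Y n x) = exp (τ • Y n) x - x := fun n => by
    rw [intervalIntegral.integral_eq_sub_of_hasDerivAt
      (fun r _ => hasDerivAt_exp_smul_apply (Y n) x r) ((hcont n).intervalIntegrable 0 τ)]
    simp
  obtain ⟨L, hL⟩ := hxy.norm.bddAbove_range
  have hdom : Tendsto (fun n => ∫ r in 0..τ, exp (r • Y n) (Y n x)) atTop
      (𝓝 (∫ r in 0..τ, S r y)) := by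
    refine intervalIntegral.tendsto_integral_filter_of_dominated_convergence (fun _ => K * L)
      (.of_forall fun n => (hcont n).aestronglyMeasurable) (.of_forall fun n => ?_) (by simp) ?_
    · refine .of_forall fun r hr => ?_
      rw [Set.uIoc_of_le hτ] at hr
      have hKr := hK n r ⟨hr.1.le, hr.2⟩
      exact (ContinuousLinearMap.le_of_opNorm_le _ hKr _).trans
        (mul_le_mul_of_nonneg_left (hL ⟨n, rfl⟩) ((norm_nonneg _).trans hKr))
    · refine .of_forall fun r hr => ?_
      rw [Set.uIoc_of_le hτ] at hr
      exact tendsto_clm_apply (.of_forall fun n => hK n r ⟨hr.1.le, hr.2⟩) (hS r hr.1.le y) hxy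
  simp only [hftc] at hdom
  exact tendsto_nhds_unique ((hS τ hτ x).sub_const x) hdom

end Exponential

section HilleYosida

open NormedSpace (exp)

section Yosida

variable {E : Type*} [NormedAddCommGroup E] [NormedSpace ℝ E] {Γ : Submodule ℝ (E × E)}
  {R R' : E →L[ℝ] E} {μ ν M b : ℝ} {p : E × E}

namespace IsResolventOf

lemma sub_eq_smul_mul (h : IsResolventOf Γ μ R) (h' : IsResolventOf Γ ν R') :
    R' - R = (μ - ν) • (R * R') := by
  ext y
  have hy := h.left_inv _ (h'.mem y)
  rw [← sub_add, ← sub_smul, map_add, map_smul, ← eq_sub_iff_add_eq] at hy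
  exact hy.symm

lemma commute (h : IsResolventOf Γ μ R) (h' : IsResolventOf Γ ν R') : Commute R R' := by
  rcases eq_or_ne μ ν with rfl | hne
  · have heq : R' = R := sub_eq_zero.1 (by simpa using h.sub_eq_smul_mul h')
    exact heq ▸ Commute.refl R
  · refine smul_right_injective _ (sub_ne_zero.2 hne) ?_
    change (μ - ν) • (R * R') = (μ - ν) • (R' * R)
    rw [← h.sub_eq_smul_mul h', ← neg_sub R, h'.sub_eq_smul_mul h, ← neg_smul, neg_sub]

lemma smul_apply_fst_sub (h : IsResolventOf Γ μ R) (hp : p ∈ Γ) : μ • R p.1 - p.1 = R p.2 := by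
  have hleft := h.left_inv p hp
  rw [map_sub, map_smul] at hleft
  rw [sub_eq_iff_eq_add, ← sub_eq_iff_eq_add', hleft]

end IsResolventOf

/-- The Yosida approximation `μ (μ R - 1)` of an operator whose resolvent at `μ` is `R`. -/
def yosidaApprox (μ : ℝ) (R : E →L[ℝ] E) : E →L[ℝ] E := μ • (μ • R - 1)

lemma yosidaApprox_apply_fst (h : IsResolventOf Γ μ R) (hp : p ∈ Γ) :
    yosidaApprox μ R p.1 = μ • R p.2 := by
  rw [← h.smul_apply_fst_sub hp]
  rfl

lemma commute_yosidaApprox (h : IsResolventOf Γ μ R) (h' : IsResolventOf Γ ν R') :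
    Commute (yosidaApprox μ R) (yosidaApprox ν R') :=
  ((((h.commute h').smul_left μ).smul_right ν).sub_left (Commute.one_left _) |>.sub_right
    (Commute.one_right _)).smul_left μ |>.smul_right ν

lemma norm_exp_smul_yosidaApprox_le [CompleteSpace E] (hμ : 2 * |b| < μ)
    (hR : ∀ n, ‖R ^ n‖ ≤ M / (μ - b) ^ n) {s : ℝ} (hs : 0 ≤ s) :
    ‖exp (s • yosidaApprox μ R)‖ ≤ M * Real.exp (2 * |b| * s) := by
  have hM : 0 ≤ M := by simpa using (norm_nonneg _).trans (hR 0)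
  have hμ0 : 0 < μ := (by positivity : 0 ≤ 2 * |b|).trans_lt hμ
  have hμb : 0 < μ - b := by linarith [le_abs_self b, abs_nonneg b]
  have hpow : ∀ n, ‖(μ • R) ^ n‖ ≤ M * (μ / (μ - b)) ^ n := fun n => by
    rw [smul_pow, norm_smul, Real.norm_of_nonneg (by positivity)]
    calc μ ^ n * ‖R ^ n‖ ≤ μ ^ n * (M / (μ - b) ^ n) := by gcongr; exact hR n
      _ = M * (μ / (μ - b)) ^ n := by rw [div_pow]; ring
  have hrate : μ * (μ / (μ - b) - 1) ≤ 2 * |b| := by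
    rw [div_sub_one hμb.ne', sub_sub_cancel, mul_div_assoc', div_le_iff₀ hμb]
    nlinarith [le_abs_self b, abs_nonneg b]
  rw [yosidaApprox, smul_smul]
  refine (norm_exp_smul_sub_one_le (by positivity) hpow).trans ?_
  refine mul_le_mul_of_nonneg_left (Real.exp_le_exp.2 ?_) hM
  calc s * μ * (μ / (μ - b) - 1) = μ * (μ / (μ - b) - 1) * s := by ring
    _ ≤ 2 * |b| * s := by gcongr

lemma tendsto_smul_resolvent_apply {μ : ℕ → ℝ} {R : ℕ → E →L[ℝ] E}
    (hdom : Dense (Prod.fst '' (Γ : Set (E × E)))) (hμ : Tendsto μ atTop atTop)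
    (hres : ∀ n, IsResolventOf Γ (μ n) (R n)) (hR : ∀ n, ‖R n‖ ≤ M / (μ n - b)) (x : E) :
    Tendsto (fun n => μ n • R n x) atTop (𝓝 x) := by
  have hbound : ∀ᶠ n in atTop, ‖μ n • R n‖ ≤ 2 * M := by
    filter_upwards [hμ.eventually_gt_atTop (2 * |b|)] with n hn
    have hμb : 0 < μ n - b := by linarith [le_abs_self b, abs_nonneg b]
    rw [norm_smul, Real.norm_of_nonneg (by linarith [abs_nonneg b])]
    calc μ n * ‖R n‖ ≤ 2 * (μ n - b) * (M / (μ n - b)) := by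
          gcongr
          · linarith [le_abs_self b]
          · exact hR n
      _ = 2 * M := by field_simp
  refine tendsto_clm_apply_of_dense (L := .id ℝ E) hbound hdom ?_ x
  rintro _ ⟨p, hp, rfl⟩
  have hzero : Tendsto (fun n => R n p.2) atTop (𝓝 0) := by
    have hlim : Tendsto (fun n => M / (μ n - b) * ‖p.2‖) atTop (𝓝 0) := by
      simpa [sub_eq_add_neg] using
        ((tendsto_atTop_add_const_right _ (-b) hμ).const_div_atTop M).mul_const ‖p.2‖
    exact squeeze_zero_norm (fun n => (R n).le_of_opNorm_le (hR n) _) hlim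
  refine (by simpa using hzero.add_const p.1 : Tendsto _ _ (𝓝 p.1)).congr fun n => ?_
  simp [← (hres n).smul_apply_fst_sub hp]

end Yosida

variable {H : Type*} [NormedAddCommGroup H] [InnerProductSpace ℝ H] [CompleteSpace H]
  {Y : ℕ → H →L[ℝ] H} {S : ℝ → H →L[ℝ] H} {Γ : Set (H × H)} {M w : ℝ}

lemma isC0Semigroup_of_tendsto_exp_smul
    (hE : ∀ n, ∀ s : ℝ, 0 ≤ s → ‖exp (s • Y n)‖ ≤ M * Real.exp (w * s))
    (hS : ∀ s, 0 ≤ s → ∀ x, Tendsto (fun n => exp (s • Y n) x) atTop (𝓝 (S s x)))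
    (hdom : Dense (Prod.fst '' Γ)) (hΓ : ∀ p ∈ Γ, Tendsto (fun n => Y n p.1) atTop (𝓝 p.2)) :
    IsC0Semigroup S := by
  let _ : NormedAlgebra ℚ (H →L[ℝ] H) := NormedAlgebra.restrictScalars ℚ ℝ _
  have hM : 0 ≤ M := by simpa using (norm_nonneg _).trans (hE 0 0 le_rfl)
  have hbound : ∀ s, 0 ≤ s → ‖S s‖ ≤ M * Real.exp (w * s) := fun s hs =>
    norm_le_of_tendsto_clm_apply (.of_forall fun n => hE n s hs) (hS s hs)
  refine ⟨?_, fun a b ha hb => ?_, fun x s hs => ?_, max M 1, le_max_right _ _, w, fun s hs => ?_⟩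
  · ext x
    exact tendsto_nhds_unique (hS 0 le_rfl x) (by simp)
  · ext x
    refine tendsto_nhds_unique (hS (a + b) (by positivity) x)
      ((tendsto_clm_apply (.of_forall fun n => hE n a ha) (hS a ha _) (hS b hb x)).congr
        fun n => ?_)
    rw [add_smul, NormedSpace.exp_add_of_commute (((Commute.refl (Y n)).smul_left a).smul_right b),
      mul_apply_eq_comp]
  · have hs0 : (0 : ℝ) ≤ s := hs
    have hmem : Set.Icc 0 (s + 1) ∈ 𝓝[Set.Ici 0] s :=
      inter_mem self_mem_nhdsWithin (mem_nhdsWithin_of_mem_nhds (Iic_mem_nhds (lt_add_one s)))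
    refine tendsto_clm_apply_of_dense (K := M * Real.exp (|w| * (s + 1))) ?_ hdom ?_ x
    · filter_upwards [hmem] with r hr
      exact (hbound r hr.1).trans (mul_exp_mul_le_mul_exp_abs_mul hM hr.1 hr.2)
    · rintro _ ⟨p, hp, rfl⟩
      refine (continuousOn_of_tendsto_exp_smul (fun n r hr => (hE n r hr.1).trans
        (mul_exp_mul_le_mul_exp_abs_mul hM hr.1 hr.2)) hS (hΓ p hp) s
          ⟨hs0, by linarith⟩).mono_of_mem_nhdsWithin hmem
  · exact (hbound s hs).trans (by gcongr; exact le_max_left _ _)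

lemma derivAtZero_of_tendsto_exp_smul {x y : H} (hsg : IsC0Semigroup S)
    (hE : ∀ n, ∀ s : ℝ, 0 ≤ s → ‖exp (s • Y n)‖ ≤ M * Real.exp (w * s))
    (hS : ∀ s, 0 ≤ s → ∀ x, Tendsto (fun n => exp (s • Y n) x) atTop (𝓝 (S s x)))
    (hxy : Tendsto (fun n => Y n x) atTop (𝓝 y)) : DerivAtZero S x y := by
  have hM : 0 ≤ M := by simpa using (norm_nonneg _).trans (hE 0 0 le_rfl)
  have hint : ∀ s, 0 ≤ s → S s x - x = ∫ r in 0..s, S r y := fun s hs =>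
    apply_sub_eq_integral_of_tendsto_exp_smul hs (fun n r hr => (hE n r hr.1).trans
      (mul_exp_mul_le_mul_exp_abs_mul hM hr.1 hr.2)) hS hxy
  have hftc : HasDerivWithinAt (fun s => ∫ r in 0..s, S r y) (S 0 y) (Set.Ici 0) 0 :=
    intervalIntegral.integral_hasDerivWithinAt_right (t := Set.Ioi 0) (by simp)
      (((hsg.continuousOn y).mono Set.Ioi_subset_Ici_self).stronglyMeasurableAtFilter_nhdsWithin
        measurableSet_Ioi 0)
      ((hsg.continuousOn y 0 Set.self_mem_Ici).mono Set.Ioi_subset_Ici_self)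
  rw [← hasDerivWithinAt_Ioi_iff_Ici, hasDerivWithinAt_iff_tendsto_slope' (by simp),
    hsg.map_zero, one_apply_eq_self] at hftc
  rw [derivAtZero_iff hsg.map_zero]
  refine hftc.congr' ?_
  filter_upwards [self_mem_nhdsWithin] with s hs
  simp [slope, discreteGenerator_apply, hint s (Set.mem_Ioi.1 hs).le]

theorem exists_isC0Semigroup_of_tendsto_of_commute (hcomm : ∀ m n, Commute (Y m) (Y n))
    (hE : ∀ n, ∀ s : ℝ, 0 ≤ s → ‖exp (s • Y n)‖ ≤ M * Real.exp (w * s))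
    (hdom : Dense (Prod.fst '' Γ)) (hΓ : ∀ p ∈ Γ, Tendsto (fun n => Y n p.1) atTop (𝓝 p.2)) :
    ∃ S : ℝ → H →L[ℝ] H, IsC0Semigroup S ∧ (∀ s, 0 ≤ s → ‖S s‖ ≤ M * Real.exp (w * s)) ∧
      ∀ p ∈ Γ, DerivAtZero S p.1 p.2 := by
  have hM : 0 ≤ M := by simpa using (norm_nonneg _).trans (hE 0 0 le_rfl)
  have hlim : ∀ s : ℝ, 0 ≤ s → ∃ L : H →L[ℝ] H, ∀ x,
      Tendsto (fun n => exp (s • Y n) x) atTop (𝓝 (L x)) := by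
    refine fun s hs => exists_clm_tendsto_of_dense (.of_forall fun n => hE n s hs) hdom ?_
    rintro _ ⟨p, hp, rfl⟩
    exact cauchySeq_exp_smul_apply hcomm (fun n r hr => (hE n r hr.1).trans
      (mul_exp_mul_le_mul_exp_abs_mul hM hr.1 hr.2)) ⟨hs, le_rfl⟩ (hΓ p hp).cauchySeq
  choose! S hS using hlim
  have hsg := isC0Semigroup_of_tendsto_exp_smul hE hS hdom hΓ
  exact ⟨S, hsg, fun s hs => norm_le_of_tendsto_clm_apply (.of_forall fun n => hE n s hs) (hS s hs),
    fun p hp => derivAtZero_of_tendsto_exp_smul hsg hE hS (hΓ p hp)⟩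

theorem exists_isC0Semigroup_of_isResolventOf {Γ : Submodule ℝ (H × H)} {b : ℝ}
    (hdom : Dense (Prod.fst '' (Γ : Set (H × H))))
    (hR : ∀ μ, b < μ → ∃ R : H →L[ℝ] H, IsResolventOf Γ μ R ∧ ∀ n, ‖R ^ n‖ ≤ M / (μ - b) ^ n) :
    ∃ S, IsC0Semigroup S ∧ IsGeneratorGraph S Γ := by
  let μ : ℕ → ℝ := fun n => n + (2 * |b| + 1)
  have hμ : ∀ n, 2 * |b| < μ n := fun n => by
    simp only [μ]; linarith [(n.cast_nonneg : (0 : ℝ) ≤ n)]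
  have hμlim : Tendsto μ atTop atTop :=
    tendsto_atTop_add_const_right _ _ tendsto_natCast_atTop_atTop
  choose R hres hpow using fun n => hR (μ n) (by linarith [hμ n, le_abs_self b, abs_nonneg b])
  obtain ⟨S, hS, hbound, hderiv⟩ := exists_isC0Semigroup_of_tendsto_of_commute
    (Y := fun n => yosidaApprox (μ n) (R n)) (fun m n => commute_yosidaApprox (hres m) (hres n))
    (fun n s hs => norm_exp_smul_yosidaApprox_le (hμ n) (hpow n) hs) hdom fun p hp => by
      simp only [yosidaApprox_apply_fst (hres _) hp]
      exact tendsto_smul_resolvent_apply hdom hμlim hres (fun n => by simpa using hpow n 1) p.2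
  exact ⟨S, hS, hS.isGeneratorGraph_of_isResolventOf hbound (hμ 0) hderiv (hres 0)⟩

end HilleYosida

section StepFunction

variable (q : ℕ → ℝ)

lemma eqOn_const_comp_floor (k : ℕ) :
    Set.EqOn (fun _ => q k) (fun s : ℝ => q ⌊s⌋₊) (Set.uIoo (k : ℝ) (k + 1 : ℕ)) := by
  intro s hs
  rw [Set.uIoo_of_le (by simp), Nat.cast_add_one] at hs
  simp only [Nat.floor_eq_on_Ico k s ⟨hs.1.le, hs.2⟩]

lemma integral_comp_floor (m : ℕ) : ∫ s in (0 : ℝ)..m, q ⌊s⌋₊ = ∑ k ∈ Finset.range m, q k := by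
  have hpiece : ∀ k : ℕ, ∫ s in (k : ℝ)..(k + 1 : ℕ), q ⌊s⌋₊ = q k := fun k => by
    rw [← intervalIntegral.integral_congr_uIoo (eqOn_const_comp_floor q k)]
    simp
  have hsum := intervalIntegral.sum_integral_adjacent_intervals (μ := volume) (a := Nat.cast)
    (n := m) fun k _ => intervalIntegrable_const.congr_uIoo (eqOn_const_comp_floor q k)
  simp only [hpiece, Nat.cast_zero] at hsum
  exact hsum.symm

lemma integral_comp_floor_natCast_mul {n : ℕ} (hn : n ≠ 0) (N : ℕ) :
    ∫ s in (0 : ℝ)..N, q ⌊n * s⌋₊ = (n : ℝ)⁻¹ * ∑ k ∈ Finset.range (n * N), q k := by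
  rw [intervalIntegral.integral_comp_mul_left (fun s => q ⌊s⌋₊) (Nat.cast_ne_zero.2 hn), mul_zero,
    ← Nat.cast_mul, integral_comp_floor, smul_eq_mul]

lemma measurable_comp_floor_mul (a : ℝ) : Measurable fun s : ℝ => q ⌊a * s⌋₊ :=
  (measurable_from_nat (f := q)).comp (Nat.measurable_floor.comp (measurable_const_mul a))

end StepFunction

lemma abs_le_of_explicit_euler {φ δ : ℕ → ℝ} {h μ : ℝ} (hh : 0 ≤ h) (hμ : 0 ≤ μ)
    (hφ : ∀ k, φ (k + 1) = (1 + μ * h) * φ k + h * δ k) (N : ℕ) :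
    |φ 0| ≤ |φ N| / (1 + μ * h) ^ N + h * ∑ k ∈ Finset.range N, |δ k| := by
  have hone : 1 ≤ 1 + μ * h := by linarith [mul_nonneg hμ hh]
  induction N with
  | zero => simp
  | succ N ih =>
    have hstep : (1 + μ * h) * |φ N| ≤ |φ (N + 1)| + h * |δ N| := by
      calc (1 + μ * h) * |φ N| = |φ (N + 1) - h * δ N| := by
            rw [hφ, add_sub_cancel_right, abs_mul, abs_of_pos (by linarith : 0 < 1 + μ * h)]
        _ ≤ |φ (N + 1)| + |h * δ N| := abs_sub _ _
        _ = |φ (N + 1)| + h * |δ N| := by rw [abs_mul, abs_of_nonneg hh]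
    have hscaled : |φ N| / (1 + μ * h) ^ N ≤ |φ (N + 1)| / (1 + μ * h) ^ (N + 1) + h * |δ N| := by
      calc |φ N| / (1 + μ * h) ^ N = (1 + μ * h) * |φ N| / (1 + μ * h) ^ (N + 1) := by
            rw [pow_succ', mul_div_mul_left _ _ (by linarith)]
        _ ≤ (|φ (N + 1)| + h * |δ N|) / (1 + μ * h) ^ (N + 1) := by gcongr
        _ ≤ |φ (N + 1)| / (1 + μ * h) ^ (N + 1) + h * |δ N| := by
            rw [add_div]
            gcongr
            exact div_le_self (by positivity) (one_le_pow₀ hone)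
    rw [Finset.sum_range_succ, mul_add]
    linarith

lemma tendsto_div_natCast_nhdsGT_zero {t : ℝ} (ht : 0 < t) :
    Tendsto (fun n : ℕ => t / n) atTop (𝓝[>] 0) := by
  refine tendsto_nhdsWithin_iff.2 ⟨tendsto_const_div_atTop_nhds_zero_nat t, ?_⟩
  filter_upwards [eventually_gt_atTop 0] with n hn
  exact div_pos ht (Nat.cast_pos.2 hn)

lemma tendsto_one_add_mul_div_pow_exp (b t : ℝ) :
    Tendsto (fun n : ℕ => (1 + b * (t / n)) ^ n) atTop (𝓝 (Real.exp (b * t))) := by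
  simpa only [mul_div_assoc] using Real.tendsto_one_add_div_pow_exp (b * t)

section BoundedApprox

variable {H : Type*} [NormedAddCommGroup H] [InnerProductSpace ℝ H] {F : ℝ → H →L[ℝ] H}
  {G : Submodule ℝ (H × H)} {M b t μ : ℝ} {f f' g : H}

/-- The approximation condition for `f`, relative to the operator with graph `G`: at every time `s`
the iterates `F (t / n) ^ ⌊n s⌋ f` are asymptotic to vectors in the domain of `G` whose images under
`G` stay bounded. -/
def HasBoundedApprox (F : ℝ → H →L[ℝ] H) (G : Submodule ℝ (H × H)) (t : ℝ) (f : H) : Prop :=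
  ∀ s : ℝ, 0 ≤ s → ∃ p : ℕ → H × H, (∀ n, p n ∈ G) ∧
    Tendsto (fun n : ℕ => ‖(F (t / n) ^ ⌊n * s⌋₊) f - (p n).1‖) atTop (𝓝 0) ∧
    ∃ R : ℝ, ∀ n, ‖(p n).2‖ ≤ R

/-- The defect of the numbers `⟪F h ^ k f, g⟫` in the difference equation
`φ (k + 1) = (1 + μ h) φ k`, per unit of time. -/
def pairingDefect (F : ℝ → H →L[ℝ] H) (μ : ℝ) (f g : H) (h : ℝ) (k : ℕ) : ℝ :=
  ⟪discreteGenerator F h ((F h ^ k) f) - μ • (F h ^ k) f, g⟫_ℝ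

lemma inner_pow_succ_apply {h : ℝ} (hh : h ≠ 0) (k : ℕ) :
    ⟪(F h ^ (k + 1)) f, g⟫_ℝ
      = (1 + μ * h) * ⟪(F h ^ k) f, g⟫_ℝ + h * pairingDefect F μ f g h k := by
  rw [pairingDefect, pow_succ', mul_apply_eq_comp, discreteGenerator_apply]
  simp only [inner_sub_left, inner_smul_left, RCLike.conj_to_real]
  field_simp
  ring

lemma abs_pairingDefect_le {h K : ℝ} {k : ℕ} (hK : ‖F h ^ k‖ ≤ K) :
    |pairingDefect F μ f g h k| ≤ K * (‖discreteGenerator F h f‖ + |μ| * ‖f‖) * ‖g‖ := by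
  have hfactor : discreteGenerator F h ((F h ^ k) f) - μ • (F h ^ k) f
      = (F h ^ k) (discreteGenerator F h f - μ • f) := by
    rw [discreteGenerator_pow_apply, map_sub, map_smul]
  rw [pairingDefect, hfactor]
  refine (abs_real_inner_le_norm _ _).trans (mul_le_mul_of_nonneg_right ?_ (norm_nonneg g))
  refine (ContinuousLinearMap.le_of_opNorm_le _ hK _).trans ?_
  refine mul_le_mul_of_nonneg_left ?_ ((norm_nonneg _).trans hK)
  simpa [norm_smul] using norm_sub_le (discreteGenerator F h f) (μ • f)

lemma PowerStable.eventually_norm_pow_floor_le (hF : PowerStable F M b) (ht : 0 < t) (τ : ℝ) :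
    ∀ᶠ n : ℕ in atTop, ∀ s ≤ τ, 0 ≤ s → ‖F (t / n) ^ ⌊n * s⌋₊‖ ≤ M * Real.exp (|b| * (t * τ)) := by
  have hlim := tendsto_div_natCast_nhdsGT_zero ht
  filter_upwards [hlim.eventually (hF.eventually_norm_pow_le (t * τ)), eventually_ne_atTop 0]
    with n hn hn0 s hsτ hs
  refine hn _ ?_
  have hne : (n : ℝ) ≠ 0 := Nat.cast_ne_zero.2 hn0
  calc (⌊n * s⌋₊ : ℝ) * (t / n) ≤ n * s * (t / n) := by
        gcongr; exact Nat.floor_le (by positivity)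
    _ = t * s := by field_simp
    _ ≤ t * τ := by gcongr

lemma PowerStable.eventually_abs_inner_pow_div_le (hF : PowerStable F M b) (ht : 0 < t)
    (hμ : 0 ≤ μ) (f g : H) (N : ℕ) : ∀ᶠ n : ℕ in atTop,
    |⟪(F (t / n) ^ (n * N)) f, g⟫_ℝ| / (1 + μ * (t / n)) ^ (n * N)
      ≤ M * ((1 + b * (t / n)) ^ n / (1 + μ * (t / n)) ^ n) ^ N * (‖f‖ * ‖g‖) := by
  filter_upwards [(tendsto_div_natCast_nhdsGT_zero ht).eventually hF] with n hn
  calc |⟪(F (t / n) ^ (n * N)) f, g⟫_ℝ| / (1 + μ * (t / n)) ^ (n * N)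
      ≤ M * (1 + b * (t / n)) ^ (n * N) * ‖f‖ * ‖g‖ / (1 + μ * (t / n)) ^ (n * N) := by
        gcongr
        exact (abs_real_inner_le_norm _ _).trans (mul_le_mul_of_nonneg_right
          (ContinuousLinearMap.le_of_opNorm_le _ (hn _) f) (norm_nonneg g))
    _ = M * ((1 + b * (t / n)) ^ n / (1 + μ * (t / n)) ^ n) ^ N * (‖f‖ * ‖g‖) := by
        rw [div_pow, ← pow_mul, ← pow_mul]
        ring

variable [CompleteSpace H]

lemma dense_image_smul_sub_of_orthogonal
    (h : ∀ g, (∀ p ∈ G, ⟪μ • p.1 - p.2, g⟫_ℝ = 0) → g = 0) :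
    Dense ((fun p : H × H => μ • p.1 - p.2) '' G) := by
  let rangeMap : H × H →ₗ[ℝ] H := μ • LinearMap.fst ℝ H H - LinearMap.snd ℝ H H
  suffices (G.map rangeMap)ᗮ = ⊥ from
    Submodule.dense_iff_topologicalClosure_eq_top.2
      (Submodule.topologicalClosure_eq_top_iff.2 this)
  exact (Submodule.eq_bot_iff _).2 fun g hg => h g fun p hp => hg _ (Submodule.mem_map_of_mem hp)

lemma tendsto_inner_discreteGenerator_sub {ι : Type*} {l : Filter ι} {h : ι → ℝ} {u : ι → H}
    {p : ι → H × H} {K : ℝ} (h0 : F 0 = 1)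
    (hE : Dense {g | ∃ g', DerivAtZero (fun r => (F r)†) g g'}) (hh : Tendsto h l (𝓝[>] 0))
    (hu : ∀ᶠ i in l, ‖u i‖ ≤ K) (hAu : ∀ᶠ i in l, ‖discreteGenerator F (h i) (u i) - (p i).2‖ ≤ K)
    (hp : ∀ i, DerivAtZero F (p i).1 (p i).2) (hup : Tendsto (fun i => u i - (p i).1) l (𝓝 0))
    (g : H) : Tendsto (fun i => ⟪discreteGenerator F (h i) (u i) - (p i).2, g⟫_ℝ) l (𝓝 0) := by
  refine tendsto_clm_apply_of_dense (L := (0 : H →L[ℝ] ℝ))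
    (T := fun i => innerSL ℝ (discreteGenerator F (h i) (u i) - (p i).2))
    (by simpa only [innerSL_apply_norm] using hAu) hE ?_ g
  rintro g ⟨g', hg⟩
  have hdiff : Tendsto (fun i => discreteGenerator (fun r => (F r)†) (h i) g - g') l (𝓝 0) := by
    simpa using (((derivAtZero_adjoint_iff h0).1 hg).comp hh).sub_const g'
  have hmain : Tendsto (fun i => ⟪u i, discreteGenerator (fun r => (F r)†) (h i) g - g'⟫_ℝ) l
      (𝓝 0) :=
    tendsto_clm_apply (T := fun i => innerSL ℝ (u i))
      (by simpa only [innerSL_apply_norm] using hu) (by simpa using tendsto_const_nhds) hdiff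
  have herr : Tendsto (fun i => ⟪u i - (p i).1, g'⟫_ℝ) l (𝓝 0) := by
    simpa using hup.inner (𝕜 := ℝ) (tendsto_const_nhds (x := g'))
  have hsum := hmain.add herr
  rw [add_zero] at hsum
  refine hsum.congr fun i => ?_
  rw [innerSL_apply_apply, inner_sub_left _ _ g, inner_discreteGenerator,
    inner_eq_of_derivAtZero_adjoint h0 (hp i) hg, inner_sub_left, inner_sub_right]
  abel

lemma HasBoundedApprox.tendsto_pairingDefect (hf : HasBoundedApprox F G t f) (h0 : F 0 = 1)
    (hF : PowerStable F M b) (ht : 0 < t) (hG : ∀ p ∈ G, DerivAtZero F p.1 p.2)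
    (hE : Dense {g | ∃ g', DerivAtZero (fun r => (F r)†) g g'}) (hff' : DerivAtZero F f f')
    (hg : ∀ p ∈ G, ⟪μ • p.1 - p.2, g⟫_ℝ = 0) {s : ℝ} (hs : 0 ≤ s) :
    Tendsto (fun n : ℕ => pairingDefect F μ f g (t / n) ⌊n * s⌋₊) atTop (𝓝 0) := by
  obtain ⟨p, hpG, hup, R, hR⟩ := hf s hs
  rw [← tendsto_zero_iff_norm_tendsto_zero] at hup
  have hlim := tendsto_div_natCast_nhdsGT_zero ht
  have hpow := hF.eventually_norm_pow_floor_le ht s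
  set K := M * Real.exp (|b| * (t * s))
  have hderiv : ∀ᶠ n : ℕ in atTop, ‖discreteGenerator F (t / n) f‖ ≤ ‖f'‖ + 1 :=
    (((derivAtZero_iff h0).1 hff').comp hlim).norm.eventually_le_const (lt_add_one _)
  have hweak := tendsto_inner_discreteGenerator_sub (h := fun n : ℕ => t / n) (p := p)
    (u := fun n : ℕ => (F (t / n) ^ ⌊n * s⌋₊) f) (K := max (K * ‖f‖) (K * (‖f'‖ + 1) + R)) h0 hE
    hlim ?_ ?_ (fun n => hG _ (hpG n)) hup g
  · have herr : Tendsto (fun n : ℕ => ⟪(F (t / n) ^ ⌊n * s⌋₊) f - (p n).1, g⟫_ℝ) atTop (𝓝 0) := by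
      simpa using hup.inner (𝕜 := ℝ) (tendsto_const_nhds (x := g))
    have hsum := hweak.sub (herr.const_mul μ)
    rw [mul_zero, sub_zero] at hsum
    refine hsum.congr fun n => ?_
    have horth := hg _ (hpG n)
    simp only [pairingDefect, inner_sub_left, inner_smul_left, RCLike.conj_to_real] at horth ⊢
    linarith
  · filter_upwards [hpow] with n hn
    exact (ContinuousLinearMap.le_of_opNorm_le _ (hn s le_rfl hs) f).trans (le_max_left _ _)
  · filter_upwards [hpow, hderiv] with n hn hn'
    have hKn := hn s le_rfl hs
    refine le_max_of_le_right ((norm_sub_le _ _).trans (add_le_add ?_ (hR n)))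
    rw [discreteGenerator_pow_apply]
    exact (ContinuousLinearMap.le_of_opNorm_le _ hKn _).trans
      (mul_le_mul_of_nonneg_left hn' ((norm_nonneg _).trans hKn))

lemma HasBoundedApprox.tendsto_sum_abs_pairingDefect (hf : HasBoundedApprox F G t f) (h0 : F 0 = 1)
    (hF : PowerStable F M b) (ht : 0 < t) (hG : ∀ p ∈ G, DerivAtZero F p.1 p.2)
    (hE : Dense {g | ∃ g', DerivAtZero (fun r => (F r)†) g g'}) (hff' : DerivAtZero F f f')
    (hg : ∀ p ∈ G, ⟪μ • p.1 - p.2, g⟫_ℝ = 0) (N : ℕ) :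
    Tendsto (fun n : ℕ => t / n * ∑ k ∈ Finset.range (n * N), |pairingDefect F μ f g (t / n) k|)
      atTop (𝓝 0) := by
  have hlim := tendsto_div_natCast_nhdsGT_zero ht
  have hderiv : ∀ᶠ n : ℕ in atTop, ‖discreteGenerator F (t / n) f‖ ≤ ‖f'‖ + 1 :=
    (((derivAtZero_iff h0).1 hff').comp hlim).norm.eventually_le_const (lt_add_one _)
  set K := M * Real.exp (|b| * (t * N))
  have hint : Tendsto (fun n : ℕ => ∫ s in (0 : ℝ)..N, |pairingDefect F μ f g (t / n) ⌊n * s⌋₊|)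
      atTop (𝓝 (∫ _ in (0 : ℝ)..N, (0 : ℝ))) := by
    refine intervalIntegral.tendsto_integral_filter_of_dominated_convergence
      (fun _ => K * (‖f'‖ + 1 + |μ| * ‖f‖) * ‖g‖) ?_ ?_ intervalIntegrable_const ?_
    · exact .of_forall fun n => (measurable_comp_floor_mul _ _).abs.aestronglyMeasurable
    · filter_upwards [hF.eventually_norm_pow_floor_le ht N, hderiv] with n hpow hn
      refine .of_forall fun s hs => ?_
      rw [Set.uIoc_of_le N.cast_nonneg] at hs
      have hKn := hpow s hs.2 hs.1.le
      have hK : 0 ≤ K := (norm_nonneg _).trans hKn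
      rw [Real.norm_eq_abs, abs_abs]
      exact (abs_pairingDefect_le hKn).trans (by gcongr)
    · refine .of_forall fun s hs => ?_
      rw [Set.uIoc_of_le N.cast_nonneg] at hs
      simpa using (hf.tendsto_pairingDefect h0 hF ht hG hE hff' hg hs.1.le).abs
  have hsum := hint.const_mul t
  rw [intervalIntegral.integral_zero, mul_zero] at hsum
  refine hsum.congr' ?_
  filter_upwards [eventually_ne_atTop 0] with n hn
  rw [integral_comp_floor_natCast_mul (fun k => |pairingDefect F μ f g (t / n) k|) hn, ← mul_assoc,
    div_eq_mul_inv]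

lemma HasBoundedApprox.inner_eq_zero (hf : HasBoundedApprox F G t f) (h0 : F 0 = 1)
    (hF : PowerStable F M b) (ht : 0 < t) (hμ : 0 ≤ μ) (hbμ : b < μ)
    (hG : ∀ p ∈ G, DerivAtZero F p.1 p.2)
    (hE : Dense {g | ∃ g', DerivAtZero (fun r => (F r)†) g g'}) (hff' : DerivAtZero F f f')
    (hg : ∀ p ∈ G, ⟪μ • p.1 - p.2, g⟫_ℝ = 0) : ⟪f, g⟫_ℝ = 0 := by
  set ρ := Real.exp (b * t) / Real.exp (μ * t)
  have hbound : ∀ N : ℕ, |⟪f, g⟫_ℝ| ≤ M * ρ ^ N * (‖f‖ * ‖g‖) + 0 := fun N => by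
    have hpow : Tendsto (fun n : ℕ => M * ((1 + b * (t / n)) ^ n / (1 + μ * (t / n)) ^ n) ^ N
        * (‖f‖ * ‖g‖)) atTop (𝓝 (M * ρ ^ N * (‖f‖ * ‖g‖))) :=
      ((((tendsto_one_add_mul_div_pow_exp b t).div (tendsto_one_add_mul_div_pow_exp μ t)
        (Real.exp_ne_zero _)).pow N).const_mul M).mul_const _
    refine ge_of_tendsto
      (hpow.add (hf.tendsto_sum_abs_pairingDefect h0 hF ht hG hE hff' hg N)) ?_
    filter_upwards [hF.eventually_abs_inner_pow_div_le ht hμ f g N, eventually_gt_atTop 0]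
      with n hn hn0
    have hh : 0 < t / n := div_pos ht (Nat.cast_pos.2 hn0)
    have heuler := abs_le_of_explicit_euler (φ := fun k => ⟪(F (t / n) ^ k) f, g⟫_ℝ) hh.le hμ
      (fun k => inner_pow_succ_apply hh.ne' k) (n * N)
    rw [pow_zero, one_apply_eq_self] at heuler
    exact heuler.trans (add_le_add_left hn _)
  have hρ : ρ < 1 := (div_lt_one (Real.exp_pos _)).2 (Real.exp_lt_exp.2 (by gcongr))
  have hzero : Tendsto (fun N : ℕ => M * ρ ^ N * (‖f‖ * ‖g‖) + 0) atTop (𝓝 0) := by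
    simpa using ((tendsto_pow_atTop_nhds_zero_of_lt_one (by positivity) hρ).const_mul M).mul_const
      (‖f‖ * ‖g‖)
  exact abs_nonpos_iff.1 (ge_of_tendsto' hzero hbound)

lemma dense_image_smul_sub_of_hasBoundedApprox (h0 : F 0 = 1) (hF : PowerStable F M b)
    (ht : 0 < t) (hμ : 0 ≤ μ) (hbμ : b < μ) (hG : ∀ p ∈ G, DerivAtZero F p.1 p.2)
    (hE : Dense {g | ∃ g', DerivAtZero (fun r => (F r)†) g g'})
    (hA : Dense {f | HasBoundedApprox F G t f ∧ ∃ f', DerivAtZero F f f'}) :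
    Dense ((fun p : H × H => μ • p.1 - p.2) '' G) := by
  refine dense_image_smul_sub_of_orthogonal fun g hg => hA.eq_zero_of_inner_right ℝ ?_
  rintro f ⟨hf, f', hff'⟩
  exact hf.inner_eq_zero h0 hF ht hμ hbμ hG hE hff' hg

end BoundedApprox

section Chernoff

variable {H : Type*} [NormedAddCommGroup H] [InnerProductSpace ℝ H] {F S : ℝ → H →L[ℝ] H}
  {Γ : Submodule ℝ (H × H)} {R : H →L[ℝ] H} {M b h μ τ : ℝ} {w y : H}

lemma IsC0Semigroup.apply_resolvent_comm (hS : IsC0Semigroup S) (hΓ : IsGeneratorGraph S Γ)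
    (hR : IsResolventOf Γ μ R) {r : ℝ} (hr : 0 ≤ r) (x : H) : R (S r x) = S r (R x) := by
  have hmem := (hΓ _ _).1 (hS.derivAtZero_apply ((hΓ _ _).2 (hR.mem x)) hr)
  have hinv := hR.left_inv _ hmem
  rwa [map_sub (S r), map_smul (S r), sub_sub_cancel] at hinv

lemma apply_resolvent_sub_resolvent_apply (hh : h ≠ 0)
    (hμ : μ ∈ resolventSet ℝ (discreteGenerator F h)) (hRw : R (μ • w - y) = w) :
    F h (resolvent (discreteGenerator F h) μ w) - resolvent (discreteGenerator F h) μ (S h w)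
      = h • (resolvent (discreteGenerator F h) μ (μ • w - y) - R (μ • w - y)
        - resolvent (discreteGenerator F h) μ (discreteGenerator S h w - y)) := by
  have hF : F h (resolvent (discreteGenerator F h) μ w)
      = resolvent (discreteGenerator F h) μ w
        + h • (μ • resolvent (discreteGenerator F h) μ w - w) := by
    rw [← apply_resolvent hμ, discreteGenerator_apply, smul_inv_smul₀ hh, add_sub_cancel]
  have hS : S h w = w + h • discreteGenerator S h w := by
    rw [discreteGenerator_apply, smul_inv_smul₀ hh, add_sub_cancel]
  rw [hF, hS, hRw]
  simp only [map_add, map_smul, map_sub, smul_sub]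
  abel

variable {ι : Type*} {l : Filter ι} {u : ι → ℝ} {k : ι → ℕ}

lemma IsC0Semigroup.tendsto_apply (hS : IsC0Semigroup S) (hu : Tendsto u l (𝓝[>] 0)) (hτ : 0 ≤ τ)
    (hk : Tendsto (fun i => k i * u i) l (𝓝 τ)) (x : H) :
    Tendsto (fun i => S (k i * u i) x) l (𝓝 (S τ x)) := by
  refine (hS.continuousOn x τ hτ).tendsto.comp (tendsto_nhdsWithin_iff.2 ⟨hk, ?_⟩)
  filter_upwards [hu.eventually self_mem_nhdsWithin] with i (hi : 0 < u i)
  exact mul_nonneg (k i).cast_nonneg hi.le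

lemma PowerStable.eventually_norm_pow_le_of_tendsto (hF : PowerStable F M b)
    (hu : Tendsto u l (𝓝[>] 0)) (hk : Tendsto (fun i => k i * u i) l (𝓝 τ)) :
    ∀ᶠ i in l, ‖F (u i) ^ k i‖ ≤ M * Real.exp (|b| * (τ + 1)) := by
  filter_upwards [hu.eventually (hF.eventually_norm_pow_le (τ + 1)),
    hk.eventually_le_const (lt_add_one τ)] with i hpow hi using hpow _ hi

variable [CompleteSpace H]

lemma PowerStable.eventually_norm_resolvent_sub_le (hF : PowerStable F M b) (hμ : b < μ)
    (hS : IsC0Semigroup S)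
    (hlim : ∀ x, Tendsto (fun h => resolvent (discreteGenerator F h) μ x) (𝓝[>] 0) (𝓝 (R x)))
    (x : H) (τ : ℝ) {ε : ℝ} (hε : 0 < ε) : ∀ᶠ h in 𝓝[>] 0, ∀ s, 0 ≤ s → s ≤ τ →
      ‖resolvent (discreteGenerator F h) μ (S s x) - R (S s x)‖ < ε := by
  have horbit : IsCompact ((fun s => S s x) '' Set.Icc 0 τ) :=
    isCompact_Icc.image_of_continuousOn ((hS.continuousOn x).mono Set.Icc_subset_Ici_self)
  have hunif := Metric.tendstoUniformlyOn_iff.1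
    (tendstoUniformlyOn_clm_of_isCompact (hF.eventually_norm_resolvent_le hμ) hlim horbit) ε hε
  filter_upwards [hunif] with h hh s hs hsτ
  rw [← dist_eq_norm, dist_comm]
  exact hh _ ⟨s, ⟨hs, hsτ⟩, rfl⟩

lemma PowerStable.eventually_norm_apply_resolvent_sub_le (hF : PowerStable F M b) (hμ : b < μ)
    (hS : IsC0Semigroup S) (hΓ : IsGeneratorGraph S Γ) (hR : IsResolventOf Γ μ R)
    (hlim : ∀ x, Tendsto (fun h => resolvent (discreteGenerator F h) μ x) (𝓝[>] 0) (𝓝 (R x)))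
    (hw : (w, y) ∈ Γ) (τ : ℝ) {ε : ℝ} (hε : 0 < ε) : ∀ᶠ h in 𝓝[>] 0, ∀ s, 0 ≤ s → s ≤ τ →
      ‖F h (resolvent (discreteGenerator F h) μ (S s w))
        - resolvent (discreteGenerator F h) μ (S (h + s) w)‖ ≤ h * ε := by
  obtain ⟨K, hK⟩ := hS.exists_norm_le τ
  have hderiv := (derivAtZero_iff hS.map_zero).1 ((hΓ _ _).2 hw)
  have herr : Tendsto (fun h => M / (μ - b) * (K * ‖discreteGenerator S h w - y‖)) (𝓝[>] 0)
      (𝓝 0) := by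
    simpa using ((hderiv.sub_const y).norm.const_mul K).const_mul (M / (μ - b))
  filter_upwards [hF.eventually_resolvent hμ, hF.eventually_norm_resolvent_le hμ,
    hF.eventually_norm_resolvent_sub_le hμ hS hlim (μ • w - y) τ (half_pos hε),
    herr.eventually_le_const (half_pos hε), self_mem_nhdsWithin]
    with h ⟨hmem, _⟩ hbound hunif hsmall (hpos : 0 < h) s hs hsτ
  have hRs := hR.left_inv _ ((hΓ _ _).1 (hS.derivAtZero_apply ((hΓ _ _).2 hw) hs))
  have hcomm : discreteGenerator S h (S s w) - S s y = S s (discreteGenerator S h w - y) := by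
    simp only [discreteGenerator_apply, map_sub, map_smul, hS.apply_comm hpos.le hs]
  have hsub : μ • S s w - S s y = S s (μ • w - y) := by rw [map_sub, map_smul]
  have hdefect := ContinuousLinearMap.le_of_opNorm_le_of_le _ hbound
    (ContinuousLinearMap.le_of_opNorm_le _ (hK s hs hsτ) (discreteGenerator S h w - y))
  rw [hS.apply_add hpos.le hs, apply_resolvent_sub_resolvent_apply hpos.ne' hmem hRs, hcomm, hsub,
    norm_smul, Real.norm_of_nonneg hpos.le]
  refine mul_le_mul_of_nonneg_left ((norm_sub_le _ _).trans ?_) hpos.le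
  linarith [hunif s hs hsτ]

lemma PowerStable.eventually_norm_pow_resolvent_sub_le (hF : PowerStable F M b) (hμ : b < μ)
    (hS : IsC0Semigroup S) (hΓ : IsGeneratorGraph S Γ) (hR : IsResolventOf Γ μ R)
    (hlim : ∀ x, Tendsto (fun h => resolvent (discreteGenerator F h) μ x) (𝓝[>] 0) (𝓝 (R x)))
    (hw : (w, y) ∈ Γ) (hτ : 0 ≤ τ) {ε : ℝ} (hε : 0 < ε) :
    ∀ᶠ h in 𝓝[>] 0, ∀ k : ℕ, k * h ≤ τ →
      ‖(F h ^ k) (resolvent (discreteGenerator F h) μ w)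
        - resolvent (discreteGenerator F h) μ (S (k * h) w)‖ ≤ ε := by
  set K := M * Real.exp (|b| * τ)
  have hK : 0 ≤ K := mul_nonneg hF.nonneg (Real.exp_pos _).le
  filter_upwards [hF.eventually_norm_pow_le τ, hF.eventually_norm_apply_resolvent_sub_le hμ hS hΓ hR
    hlim hw τ (ε := ε / (τ * K + 1)) (by positivity), self_mem_nhdsWithin]
    with h hpow hstep (hpos : 0 < h) k hk
  have hle : ∀ j < k, j * h ≤ τ := fun j hj => le_trans (by gcongr) hk
  have htele := norm_pow_apply_sub_le (P := F h) (K := K) (k := k) (fun j hj => hpow j (hle j hj))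
    (fun j => resolvent (discreteGenerator F h) μ (S (j * h) w)) fun j hj => by
      have hj' := hstep (j * h) (by positivity) (hle j hj)
      rwa [show h + j * h = (j + 1 : ℕ) * h by push_cast; ring] at hj'
  rw [Nat.cast_zero, zero_mul, hS.map_zero, one_apply_eq_self] at htele
  refine htele.trans ?_
  calc k * (K * (h * (ε / (τ * K + 1)))) = k * h * K * (ε / (τ * K + 1)) := by ring
    _ ≤ (τ * K + 1) * (ε / (τ * K + 1)) := by
        gcongr
        linarith [mul_le_mul_of_nonneg_right hk hK]
    _ = ε := by field_simp

lemma PowerStable.tendsto_pow_apply_resolvent (hF : PowerStable F M b) (hμ : b < μ)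
    (hS : IsC0Semigroup S) (hΓ : IsGeneratorGraph S Γ) (hR : IsResolventOf Γ μ R)
    (hlim : ∀ x, Tendsto (fun h => resolvent (discreteGenerator F h) μ x) (𝓝[>] 0) (𝓝 (R x)))
    (hw : (w, y) ∈ Γ) (hu : Tendsto u l (𝓝[>] 0)) (hτ : 0 ≤ τ)
    (hk : Tendsto (fun i => k i * u i) l (𝓝 τ)) :
    Tendsto (fun i => (F (u i) ^ k i) (R w)) l (𝓝 (S τ (R w))) := by
  have hres := hF.eventually_norm_resolvent_le hμ
  set Rd := fun h => resolvent (discreteGenerator F h) μ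
  have hstart : Tendsto (fun i => (F (u i) ^ k i) (R w - Rd (u i) w)) l (𝓝 0) :=
    tendsto_clm_apply (hF.eventually_norm_pow_le_of_tendsto hu hk) (y := 0)
      (by simpa using tendsto_const_nhds) (by simpa using ((hlim w).comp hu).const_sub (R w))
  have hmiddle : Tendsto (fun i => (F (u i) ^ k i) (Rd (u i) w) - Rd (u i) (S (k i * u i) w)) l
      (𝓝 0) := by
    refine NormedAddGroup.tendsto_nhds_zero.2 fun ε hε => ?_
    filter_upwards [hk.eventually_le_const (lt_add_one τ),
      hu.eventually (hF.eventually_norm_pow_resolvent_sub_le hμ hS hΓ hR hlim hw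
        (by linarith : 0 ≤ τ + 1) (half_pos hε))] with i hi hclose
    exact (hclose _ hi).trans_lt (half_lt_self hε)
  have hend : Tendsto (fun i => Rd (u i) (S (k i * u i) w)) l (𝓝 (R (S τ w))) :=
    tendsto_clm_apply (hu.eventually hres) ((hlim _).comp hu) (hS.tendsto_apply hu hτ hk w)
  have hsum := (hstart.add hmiddle).add hend
  rw [zero_add, zero_add, hS.apply_resolvent_comm hΓ hR hτ] at hsum
  refine hsum.congr fun i => ?_
  rw [map_sub]
  abel

theorem PowerStable.tendsto_pow_apply (hF : PowerStable F M b) (hμ : b < μ)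
    (hS : IsC0Semigroup S) (hΓ : IsGeneratorGraph S Γ)
    (hdom : Dense (Prod.fst '' (Γ : Set (H × H)))) (hR : IsResolventOf Γ μ R)
    (hlim : ∀ x, Tendsto (fun h => resolvent (discreteGenerator F h) μ x) (𝓝[>] 0) (𝓝 (R x)))
    (hu : Tendsto u l (𝓝[>] 0)) (hτ : 0 ≤ τ) (hk : Tendsto (fun i => k i * u i) l (𝓝 τ)) (x : H) :
    Tendsto (fun i => (F (u i) ^ k i) x) l (𝓝 (S τ x)) := by
  have hrange : DenseRange R := hdom.mono <| by
    rintro _ ⟨p, hp, rfl⟩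
    exact ⟨_, hR.left_inv p hp⟩
  refine tendsto_clm_apply_of_dense (hF.eventually_norm_pow_le_of_tendsto hu hk)
    (hrange.dense_image R.continuous hdom) ?_ x
  rintro _ ⟨_, ⟨⟨w, y⟩, hw, rfl⟩, rfl⟩
  exact hF.tendsto_pow_apply_resolvent hμ hS hΓ hR hlim hw hu hτ hk

end Chernoff

section Generation

variable {H : Type*} [NormedAddCommGroup H] [InnerProductSpace ℝ H] [CompleteSpace H]
  {F S : ℝ → H →L[ℝ] H} {G : Submodule ℝ (H × H)} {M b t : ℝ}

theorem exists_isGeneratorGraph_of_hasBoundedApprox (h0 : F 0 = 1) (hF : PowerStable F M b)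
    (hb : 0 ≤ b) (ht : 0 < t) (hG : ∀ p ∈ G, DerivAtZero F p.1 p.2)
    (hE : Dense {g | ∃ g', DerivAtZero (fun r => (F r)†) g g'})
    (hA : Dense {f | f ∈ Prod.fst '' (G : Set (H × H)) ∧ HasBoundedApprox F G t f}) :
    ∃ S, IsC0Semigroup S ∧ IsGeneratorGraph S G.topologicalClosure := by
  have hdom : Dense (Prod.fst '' (G.topologicalClosure : Set (H × H))) :=
    hA.mono fun _ hf => Set.image_mono G.le_topologicalClosure hf.1
  have hA' : Dense {f | HasBoundedApprox F G t f ∧ ∃ f', DerivAtZero F f f'} := hA.mono <| by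
    rintro _ ⟨⟨p, hp, rfl⟩, hf⟩
    exact ⟨hf, p.2, hG p hp⟩
  refine exists_isC0Semigroup_of_isResolventOf (M := M) (b := b) hdom fun μ hμ => ?_
  have hrange := dense_image_smul_sub_of_hasBoundedApprox h0 hF ht (hb.trans hμ.le) hμ hG hE hA'
  obtain ⟨R, hR, hpow, -⟩ :=
    hF.exists_isResolventOf hμ (fun p hp => (derivAtZero_iff h0).1 (hG p hp)) hrange
  exact ⟨R, hR, hpow⟩

lemma IsC0Semigroup.dense_image_smul_sub (hS : IsC0Semigroup S)
    (hdom : Dense (Prod.fst '' (G : Set (H × H)))) (hΓ : IsGeneratorGraph S G.topologicalClosure)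
    {w μ : ℝ} (hbound : ∀ s : ℝ, 0 ≤ s → ‖S s‖ ≤ M * Real.exp (w * s)) (hw : w < μ) :
    Dense ((fun p : H × H => μ • p.1 - p.2) '' G) := by
  refine dense_image_smul_sub_of_orthogonal fun g hg => hdom.eq_zero_of_inner_right ℝ ?_
  have hclosed : IsClosed {p : H × H | ⟪μ • p.1 - p.2, g⟫_ℝ = 0} :=
    isClosed_eq (by fun_prop) continuous_const
  rintro _ ⟨p, hp, rfl⟩
  have hderiv : DerivAtZero S p.1 p.2 := (hΓ _ _).2 (G.le_topologicalClosure hp)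
  refine hS.inner_eq_zero_of_inner_deriv hbound hw hderiv fun r hr => ?_
  have horth : ⟪μ • S r p.1 - S r p.2, g⟫_ℝ = 0 :=
    closure_minimal hg hclosed ((hΓ _ _).1 (hS.derivAtZero_apply hderiv hr))
  rw [inner_sub_left, inner_smul_left, RCLike.conj_to_real] at horth
  linarith

theorem PowerStable.tendsto_pow_apply_of_isGeneratorGraph (hF : PowerStable F M b) (h0 : F 0 = 1)
    (hG : ∀ p ∈ G, DerivAtZero F p.1 p.2) (hdom : Dense (Prod.fst '' (G : Set (H × H))))
    (hS : IsC0Semigroup S) (hΓ : IsGeneratorGraph S G.topologicalClosure) {ι : Type*} {l : Filter ι}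
    {u : ι → ℝ} {k : ι → ℕ} {τ : ℝ} (hu : Tendsto u l (𝓝[>] 0)) (hτ : 0 ≤ τ)
    (hk : Tendsto (fun i => k i * u i) l (𝓝 τ)) (x : H) :
    Tendsto (fun i => (F (u i) ^ k i) x) l (𝓝 (S τ x)) := by
  obtain ⟨-, -, -, K, -, w, hbound⟩ := id hS
  have hbμ : b < max b w + 1 := (le_max_left b w).trans_lt (lt_add_one _)
  have hwμ : w < max b w + 1 := (le_max_right b w).trans_lt (lt_add_one _)
  obtain ⟨R, hR, -, hlim⟩ := hF.exists_isResolventOf hbμ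
    (fun p hp => (derivAtZero_iff h0).1 (hG p hp)) (hS.dense_image_smul_sub hdom hΓ hbound hwμ)
  exact hF.tendsto_pow_apply hbμ hS hΓ (hdom.mono (Set.image_mono G.le_topologicalClosure)) hR hlim
    hu hτ hk x

lemma tendsto_floor_natCast_mul_mul_div (t : ℝ) {s : ℝ} (hs : 0 ≤ s) :
    Tendsto (fun n : ℕ => (⌊n * s⌋₊ : ℝ) * (t / n)) atTop (𝓝 (t * s)) := by
  refine (((tendsto_nat_floor_mul_div_atTop hs).comp
    (tendsto_natCast_atTop_atTop (R := ℝ))).const_mul t).congr fun n => ?_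
  rw [Function.comp_apply, mul_comm s]
  ring

theorem PowerStable.hasBoundedApprox (hF : PowerStable F M b) (h0 : F 0 = 1)
    (hG : ∀ p ∈ G, DerivAtZero F p.1 p.2) (hdom : Dense (Prod.fst '' (G : Set (H × H))))
    (hS : IsC0Semigroup S) (hΓ : IsGeneratorGraph S G.topologicalClosure) (ht : 0 < t)
    {f : H} (hf : f ∈ Prod.fst '' (G : Set (H × H))) : HasBoundedApprox F G t f := by
  obtain ⟨p, hp, rfl⟩ := hf
  intro s hs
  have horbit := (hΓ _ _).1 (hS.derivAtZero_apply ((hΓ _ _).2 (G.le_topologicalClosure hp))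
    (mul_nonneg ht.le hs))
  obtain ⟨q, hqG, hq⟩ := mem_closure_iff_seq_limit.1 horbit
  have hchernoff := hF.tendsto_pow_apply_of_isGeneratorGraph h0 hG hdom hS hΓ
    (tendsto_div_natCast_nhdsGT_zero ht) (mul_nonneg ht.le hs)
    (tendsto_floor_natCast_mul_mul_div t hs) p.1
  obtain ⟨R, hR⟩ := hq.snd_nhds.norm.bddAbove_range
  refine ⟨q, hqG, ?_, R, fun n => hR ⟨n, rfl⟩⟩
  simpa using (hchernoff.sub hq.fst_nhds).norm

end Generation

section Operators

variable {H : Type*} [NormedAddCommGroup H] [InnerProductSpace ℝ H] {F S T : ℝ → H →L[ℝ] H}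
  {C D Z : H →ₗ.[ℝ] H} {M a b t : ℝ}

lemma isGeneratorOf_iff : IsGeneratorOf S Z ↔ IsGeneratorGraph S Z.graph := by
  simp [IsGeneratorOf, IsGeneratorGraph, LinearPMap.mem_graph_iff]

lemma image_fst_graph : Prod.fst '' (Z.graph : Set (H × H)) = Z.domain := by
  ext x
  simp only [Set.mem_image, SetLike.mem_coe, Prod.exists, exists_and_right, exists_eq_right]
  exact LinearPMap.mem_domain_iff.symm

lemma IsGeneratorOf.dense_derivAtZero (hZ : IsGeneratorOf S Z) (hd : Dense (Z.domain : Set H)) :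
    Dense {x | ∃ y, DerivAtZero S x y} :=
  hd.mono fun x hx => ⟨Z ⟨x, hx⟩, (hZ _ _).2 ⟨hx, rfl⟩⟩

lemma derivAtZero_mul_of_mem_graph_add (hS : IsC0Semigroup S) (hT : IsC0Semigroup T)
    (hC : IsGeneratorOf S C) (hD : IsGeneratorOf T D) {p : H × H} (hp : p ∈ (C + D).graph) :
    DerivAtZero (fun r => S r * T r) p.1 p.2 := by
  obtain ⟨x, hx, hxp⟩ := (LinearPMap.mem_graph_iff _).1 hp
  have hxCD : (x : H) ∈ C.domain ⊓ D.domain := x.2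
  obtain ⟨K, hK⟩ := hS.exists_eventually_norm_le
  rw [← hx, ← hxp]
  exact .mul hS.map_zero hT.map_zero hK (hS.tendsto_zero _) ((hC _ _).2 ⟨hxCD.1, rfl⟩)
    ((hD _ _).2 ⟨hxCD.2, rfl⟩)

lemma trotterApproxBounded_iff : TrotterApproxBounded S T C D t ↔
    ∃ A : Submodule ℝ H, (A : Set H) ⊆ (C + D).domain ∧ Dense (A : Set H) ∧
      ∀ f ∈ A, HasBoundedApprox (fun r => S r * T r) (C + D).graph t f := by
  refine exists_congr fun A => and_congr_right fun _ => and_congr_right fun _ =>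
    forall₂_congr fun f _ => forall₂_congr fun s _ => ⟨?_, ?_⟩
  · rintro ⟨fs, hlim, hbound⟩
    exact ⟨fun n => (fs n, (C + D) (fs n)), fun n => (C + D).mem_graph _, hlim, hbound⟩
  · rintro ⟨p, hp, hlim, hbound⟩
    choose fs hfs hfs' using fun n => (LinearPMap.mem_graph_iff _).1 (hp n)
    exact ⟨fs, by simpa only [hfs] using hlim, by simpa only [hfs'] using hbound⟩

lemma eventually_exp_mul_le_one_add_mul (hab : a < b) :
    ∀ᶠ h in 𝓝[>] (0 : ℝ), Real.exp (a * h) ≤ 1 + b * h := by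
  have hderiv : HasDerivAt (fun h => Real.exp (a * h)) a 0 := by
    simpa using ((hasDerivAt_id (0 : ℝ)).const_mul a).exp
  filter_upwards [hderiv.tendsto_slope_zero_right.eventually_le_const hab, self_mem_nhdsWithin]
    with h hslope (hh : 0 < h)
  simp only [zero_add, mul_zero, Real.exp_zero, smul_eq_mul] at hslope
  rw [inv_mul_le_iff₀ hh] at hslope
  linarith

lemma powerStable_of_norm_pow_le_exp (hM : 1 ≤ M) (hab : a < b)
    (hF : ∀ h : ℝ, 0 < h → ∀ m : ℕ, 0 < m → ‖F h ^ m‖ ≤ M * Real.exp (a * h * m)) :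
    PowerStable F M b := by
  filter_upwards [eventually_exp_mul_le_one_add_mul hab, self_mem_nhdsWithin]
    with h hexp (hh : 0 < h) m
  rcases m.eq_zero_or_pos with rfl | hm
  · rw [pow_zero, pow_zero, mul_one]
    exact ContinuousLinearMap.norm_id_le.trans hM
  · calc ‖F h ^ m‖ ≤ M * Real.exp (a * h * m) := hF h hh m hm
      _ = M * Real.exp (a * h) ^ m := by rw [← Real.exp_nat_mul, mul_comm (m : ℝ)]
      _ ≤ M * (1 + b * h) ^ m := by gcongr

variable [CompleteSpace H]

lemma IsGeneratorOf.adjointDerivAtZero (hZ : IsGeneratorOf S Z) (hd : Dense (Z.domain : Set H))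
    {g : H} (hg : g ∈ Z.adjoint.domain) : AdjointDerivAtZero S g (Z.adjoint ⟨g, hg⟩) := by
  intro x y hxy
  obtain ⟨hx, rfl⟩ := (hZ _ _).1 hxy
  exact (LinearPMap.adjoint_isFormalAdjoint hd).symm ⟨x, hx⟩ ⟨g, hg⟩

lemma dense_derivAtZero_adjoint_mul (hS : IsC0Semigroup S) (hT : IsC0Semigroup T)
    (hC : IsGeneratorOf S C) (hD : IsGeneratorOf T D) (hdC : Dense (C.domain : Set H))
    (hdD : Dense (D.domain : Set H))
    (h : Dense ((C.adjoint.domain ⊓ D.adjoint.domain : Submodule ℝ H) : Set H)) :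
    Dense {g | ∃ g', DerivAtZero (fun r => (S r * T r)†) g g'} :=
  h.mono fun _ hg => ⟨_, hS.derivAtZero_adjoint_mul hT (hC.dense_derivAtZero hdC)
    (hD.dense_derivAtZero hdD)
    (h.mono fun _ hg => ⟨⟨_, hC.adjointDerivAtZero hdC hg.1⟩, _, hD.adjointDerivAtZero hdD hg.2⟩)
    (hC.adjointDerivAtZero hdC hg.1) (hD.adjointDerivAtZero hdD hg.2)⟩

lemma isClosable_of_dense_derivAtZero_adjoint (h0 : F 0 = 1)
    (hZ : ∀ p ∈ Z.graph, DerivAtZero F p.1 p.2)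
    (hE : Dense {g | ∃ g', DerivAtZero (fun r => (F r)†) g g'}) : Z.IsClosable := by
  refine ⟨Z.graph.topologicalClosure.toLinearPMap, (Submodule.toLinearPMap_graph_eq _ ?_).symm⟩
  intro p hp hp0
  refine hE.eq_zero_of_inner_left ℝ ?_
  rintro g ⟨g', hg⟩
  have hclosed : IsClosed {p : H × H | ⟪p.2, g⟫_ℝ = ⟪p.1, g'⟫_ℝ} :=
    isClosed_eq (by fun_prop) (by fun_prop)
  have hp' : ⟪p.2, g⟫_ℝ = ⟪p.1, g'⟫_ℝ :=
    closure_minimal (fun q hq => inner_eq_of_derivAtZero_adjoint h0 (hZ q hq) hg) hclosed hp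
  rw [hp', hp0, inner_zero_left]

end Operators

/-- Corollary 4: on a Hilbert space, a Trotter-type criterion with
boundedness of `(C+D)fₙ` for the closure of `C + D` to generate a `C₀`-semigroup, together
with the Trotter product formula. -/
theorem trotter_cor4 (t : ℝ) (ht : 0 < t)
    (SC SD : ℝ → (B →L[ℝ] B)) (hSC : IsC0Semigroup SC) (hSD : IsC0Semigroup SD)
    (C D : B →ₗ.[ℝ] B) (hC : IsGeneratorOf SC C) (hD : IsGeneratorOf SD D)
    (h1 : Dense (((C + D).domain : Submodule ℝ B) : Set B))
    (h2 : Dense (((C.adjoint.domain ⊓ D.adjoint.domain : Submodule ℝ B)) : Set B))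
    (h3 : ∃ a M : ℝ, 1 ≤ M ∧ ∀ n m : ℕ, 0 < n → 0 < m → ∀ s : ℝ, 0 < s →
      ‖(SC (s / n) * SD (s / n)) ^ m‖ ≤ M * Real.exp (a * s * m / n)) :
    (((C + D).IsClosable ∧
        ∃ S : ℝ → (B →L[ℝ] B), IsC0Semigroup S ∧ IsGeneratorOf S (C + D).closure) ↔
      TrotterApproxBounded SC SD C D t) ∧
    (TrotterApproxBounded SC SD C D t →
      ∀ S : ℝ → (B →L[ℝ] B), IsC0Semigroup S → IsGeneratorOf S (C + D).closure →
        ∀ s : ℝ, 0 < s → ∀ f : B,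
          Tendsto (fun n : ℕ => ((SC (s / n) * SD (s / n)) ^ n) f) atTop (𝓝 (S s f))) := by
  obtain ⟨a, M, hM, h3⟩ := h3
  have hF : PowerStable (fun r => SC r * SD r) M (|a| + 1) :=
    powerStable_of_norm_pow_le_exp hM ((le_abs_self a).trans_lt (lt_add_one _)) fun h hh m hm => by
      simpa using h3 1 m one_pos hm h hh
  have h0 : SC 0 * SD 0 = 1 := by rw [hSC.map_zero, hSD.map_zero, one_mul]
  have hG : ∀ p ∈ (C + D).graph, DerivAtZero (fun r => SC r * SD r) p.1 p.2 :=
    fun p hp => derivAtZero_mul_of_mem_graph_add hSC hSD hC hD hp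
  have hE := dense_derivAtZero_adjoint_mul hSC hSD hC hD (h1.mono fun _ hx => And.left hx)
    (h1.mono fun _ hx => And.right hx) h2
  have hclos : (C + D).IsClosable := isClosable_of_dense_derivAtZero_adjoint h0 hG hE
  have hdom : Dense (Prod.fst '' ((C + D).graph : Set (B × B))) := by rwa [image_fst_graph]
  simp only [isGeneratorOf_iff, ← hclos.graph_closure_eq_closure_graph, trotterApproxBounded_iff]
  refine ⟨⟨?_, ?_⟩, fun _ S hS hΓ s hs => ?_⟩
  · rintro ⟨-, S, hS, hΓ⟩
    exact ⟨(C + D).domain, subset_rfl, h1, fun f hf =>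
      hF.hasBoundedApprox h0 hG hdom hS hΓ ht (image_fst_graph.ge hf)⟩
  · rintro ⟨A, hAdom, hA, happrox⟩
    exact ⟨hclos, exists_isGeneratorGraph_of_hasBoundedApprox h0 hF (by positivity) ht hG hE
      (hA.mono fun f hf => ⟨image_fst_graph.ge (hAdom hf), happrox f hf⟩)⟩
  · refine hF.tendsto_pow_apply_of_isGeneratorGraph h0 hG hdom hS hΓ
      (tendsto_div_natCast_nhdsGT_zero hs) hs.le (tendsto_const_nhds.congr' ?_)
    filter_upwards [eventually_ne_atTop 0] with n hn
    rw [mul_div_cancel₀ s (Nat.cast_ne_zero.2 hn)]
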